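/- Let A be a σ-unital non-elementary algebraically simple C*-algebra with QT(A) ≠ ∅, and let a, b ∈ (A⊗K)_+ be such that d_τ(a) < d_τ(b) for all τ ∈ \overline{QT(A)}^w and ω(a) = 0. Then there exist mutually orthogonal nonzero positive contractions b₁, b₀ ∈ Her(b) and 0 < δ < 1/4 such that d_τ(a) < d_τ(f_δ(b₁)) for all τ ∈ \overline{QT(A)}^w. -/

import Mathlib

open scoped ENNReal
open Filter Topology

noncomputable section

namespace Paper

/-! ### Generic definitions in a (non-unital) C*-algebra -/

variable (R : Type*) [NonUnitalCStarAlgebra R] [PartialOrder R] [StarOrderedRing R]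

variable {R} in
/-- The hereditary C*-subalgebra generated by `b`, i.e. `closure (b R b)`. -/
def her (b : R) : Set R := closure {x : R | ∃ y : R, x = b * y * b}

/-- `I` is a (not necessarily closed) two-sided ideal of the subalgebra `B`. -/
def IsIdealIn (B I : Set R) : Prop :=
  I ⊆ B ∧ (0 : R) ∈ I ∧ (∀ x ∈ I, ∀ y ∈ I, x + y ∈ I) ∧ (∀ x ∈ I, -x ∈ I) ∧
    (∀ x ∈ I, ∀ b ∈ B, x * b ∈ I ∧ b * x ∈ I)

variable {R} in
/-- The Pedersen ideal of the subalgebra `B`: the minimal dense two-sided ideal of `B`,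
equivalently the intersection of all dense two-sided ideals of `B`. -/
def pedersenIn (B : Set R) : Set R :=
  ⋂ I ∈ {I : Set R | IsIdealIn R B I ∧ B ⊆ closure I}, I

/-- The Pedersen ideal of `R`. -/
def pedersen : Set R := pedersenIn (Set.univ : Set R)

variable {R} in
/-- Cuntz subequivalence `a ≲ b`. -/
def CuntzLE (a b : R) : Prop :=
  ∃ x : ℕ → R, Tendsto (fun n => ‖a - star (x n) * b * x n‖) atTop (𝓝 0)

variable {R} in
/-- Cuntz subequivalence relative to a subset `B` (the `xₙ` are taken in `B`). -/
def CuntzLEIn (B : Set R) (a b : R) : Prop :=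
  ∃ x : ℕ → R, (∀ n, x n ∈ B) ∧ Tendsto (fun n => ‖a - star (x n) * b * x n‖) atTop (𝓝 0)

variable {R} in
/-- Cuntz equivalence `a ∼ b`. -/
def CuntzEq (a b : R) : Prop := CuntzLE a b ∧ CuntzLE b a

/-- The cut-off function `f_ε`: `0` on `[0, ε/2]`, `1` on `[ε, ∞)`, linear in between. -/
def cutoff (ε : ℝ) : ℝ → ℝ := fun t => min 1 (max 0 (2 * t / ε - 1))

variable {R} in
/-- `f_ε(a)`, via the (non-unital) continuous functional calculus. -/
def fEps (ε : ℝ) (a : R) : R := cfcₙ (cutoff ε) a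

/-- A densely defined 2-quasitrace on `R` (recorded by its values on positive elements;
the value on non-positive elements is normalised to `0`). -/
structure QuasiTrace : Type _ where
  toFun : R → ℝ≥0∞
  zero_of_not_nonneg : ∀ a : R, ¬ (0 ≤ a) → toFun a = 0
  map_zero : toFun 0 = 0
  map_smul : ∀ (r : ℝ) (a : R), 0 < r → 0 ≤ a → toFun (r • a) = ENNReal.ofReal r * toFun a
  map_add_of_commute : ∀ a b : R, 0 ≤ a → 0 ≤ b → a * b = b * a →
    toFun (a + b) = toFun a + toFun b
  map_star_mul_self : ∀ x : R, toFun (star x * x) = toFun (x * star x)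
  lowerSemicontinuousOn : LowerSemicontinuousOn toFun {a : R | 0 ≤ a}
  finite_on_pedersen : ∀ a ∈ pedersen R, 0 ≤ a → toFun a < ∞
  exists_matrix_extension : ∃ σ : Matrix (Fin 2) (Fin 2) R → ℝ≥0∞,
    (∀ a : R, σ (fun i j => if i = 0 ∧ j = 0 then a else 0) = toFun a) ∧
    σ 0 = 0 ∧
    (∀ (r : ℝ) (x : Matrix (Fin 2) (Fin 2) R), 0 < r → (∃ y, x = star y * y) →
      σ (r • x) = ENNReal.ofReal r * σ x) ∧
    (∀ x y : Matrix (Fin 2) (Fin 2) R, (∃ z, x = star z * z) → (∃ z, y = star z * z) →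
      x * y = y * x → σ (x + y) = σ x + σ y) ∧
    (∀ x : Matrix (Fin 2) (Fin 2) R, σ (star x * x) = σ (x * star x))

/-- The topology of pointwise convergence on the Pedersen ideal. -/
instance : TopologicalSpace (QuasiTrace R) :=
  TopologicalSpace.induced (fun τ => fun a : pedersen R => τ.toFun a) inferInstance

variable {R}

/-- The zero quasitrace. -/
def QuasiTrace.IsZero (τ : QuasiTrace R) : Prop := ∀ a : R, τ.toFun a = 0

/-- The dimension function `d_τ(a) = lim_{ε → 0} τ(f_ε(a))`. -/
def dTau (τ : QuasiTrace R) (a : R) : ℝ≥0∞ :=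
  ⨆ n : ℕ, τ.toFun (fEps (1 / (n + 1)) a)

/-- `ω(a)` relative to a set `S` of quasitraces:
`lim_n sup {d_τ(a) - τ(f_{1/n}(a)) : τ ∈ S}`. -/
def omegaOn (S : Set (QuasiTrace R)) (a : R) : ℝ≥0∞ :=
  ⨅ n : ℕ, ⨆ τ ∈ S, (dTau τ a - τ.toFun (fEps (1 / (n + 1)) a))

/-- The seminorm `‖x‖_{2,S}`. -/
def norm2On (S : Set (QuasiTrace R)) (x : R) : ℝ≥0∞ :=
  ⨆ τ ∈ S, (τ.toFun (star x * x)) ^ (1 / 2 : ℝ)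

variable (R)

/-- `R` has (Blackadar's) strict comparison. -/
def StrictComparison : Prop :=
  ∀ a b : R, 0 ≤ a → 0 ≤ b →
    (∀ τ : QuasiTrace R, ¬ τ.IsZero → dTau τ a < dTau τ b) → CuntzLE a b

/-- `R` is a simple C*-algebra: it is nonzero and has no nontrivial closed two-sided ideals. -/
def IsSimpleCStar : Prop :=
  (∃ x : R, x ≠ 0) ∧
    ∀ I : TwoSidedIdeal R, IsClosed (I : Set R) → (I : Set R) = {0} ∨ (I : Set R) = Set.univ

/-- `R` is σ-unital: it contains a strictly positive element `h`
(equivalently, `Her(h) = R`). -/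
def SigmaUnital : Prop := ∃ h : R, 0 ≤ h ∧ her h = Set.univ

/-- `R` is elementary: isomorphic to the algebra of compact operators on some Hilbert space. -/
def IsElementary : Prop :=
  ∃ (H : Type) (_ : NormedAddCommGroup H) (_ : InnerProductSpace ℂ H) (_ : CompleteSpace H)
    (φ : R →⋆ₙₐ[ℂ] (H →L[ℂ] H)), Function.Injective φ ∧
      Set.range φ = {T : H →L[ℂ] H | IsCompactOperator (⇑T)}

/-- `R` is purely infinite: `R ≇ ℂ` and `b ≲ a` for all nonzero positive `a, b`. -/
def PurelyInfinite : Prop :=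
  (¬ ∃ φ : R →⋆ₙₐ[ℂ] ℂ, Function.Bijective φ) ∧
    ∀ a b : R, 0 ≤ a → 0 ≤ b → a ≠ 0 → b ≠ 0 → CuntzLE b a

/-- `R` is finite: its minimal unitization contains no non-unitary isometry. -/
def IsFiniteCStar : Prop :=
  ∀ v : Unitization ℂ R, star v * v = 1 → v * star v = 1

/-- `R` has stable rank one: the invertible elements are dense in the minimal unitization. -/
def StableRankOne : Prop := Dense {x : Unitization ℂ R | IsUnit x}

variable {R}

/-- `c` represents `n·[a]` in the Cuntz semigroup: it is the sum of `n` mutually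
orthogonal positive elements, each Cuntz equivalent to `a`. -/
def IsNFoldRep (n : ℕ) (a c : R) : Prop :=
  ∃ f : Fin n → R, (∀ i, 0 ≤ f i) ∧ (∀ i, CuntzEq (f i) a) ∧
    (∀ i j, i ≠ j → f i * f j = 0) ∧ c = ∑ i, f i

/-- `s` represents the supremum of the increasing sequence of Cuntz classes `[y n]`. -/
def IsCuntzLUB (y : ℕ → R) (s : R) : Prop :=
  (∀ n, CuntzLE (y n) s) ∧ ∀ c : R, 0 ≤ c → (∀ n, CuntzLE (y n) c) → CuntzLE s c

/-- `[x] ≪ [y]` in the Cuntz semigroup. -/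
def CuntzWayBelow (x y : R) : Prop :=
  ∀ yseq : ℕ → R, (∀ n, 0 ≤ yseq n) → (∀ n, CuntzLE (yseq n) (yseq (n + 1))) →
    ∀ s : R, 0 ≤ s → IsCuntzLUB yseq s → CuntzLE y s → ∃ n₀, CuntzLE x (yseq n₀)

variable (R)

/-- The Cuntz semigroup of `R` is almost unperforated. -/
def AlmostUnperforated : Prop :=
  ∀ (a b : R) (k : ℕ), 1 ≤ k → 0 ≤ a → 0 ≤ b →
    (∃ c d : R, IsNFoldRep (k + 1) a c ∧ IsNFoldRep k b d ∧ CuntzLE c d) → CuntzLE a b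

/-- The Cuntz semigroup of `R` is almost divisible. -/
def AlmostDivisible : Prop :=
  ∀ x y : R, 0 ≤ x → 0 ≤ y → CuntzWayBelow x y → ∀ n : ℕ, 1 ≤ n →
    ∃ z : R, 0 ≤ z ∧ (∃ c : R, IsNFoldRep n z c ∧ CuntzLE c y) ∧
      (∃ c : R, IsNFoldRep (n + 1) z c ∧ CuntzLE x c)

/-! ### The stabilization `W ≅ A ⊗ K` -/

variable (A W : Type*) [NonUnitalCStarAlgebra A] [PartialOrder A] [StarOrderedRing A]
  [NonUnitalCStarAlgebra W] [PartialOrder W] [StarOrderedRing W]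

/-- A realization of `W` as the stabilization `A ⊗ K`: the maps `emb i j : a ↦ a ⊗ e_{ij}`
are isometric, satisfy the matrix-unit relations, and have dense joint linear span. -/
structure Stabilization : Type _ where
  emb : ℕ → ℕ → (A →ₗ[ℂ] W)
  emb_mul : ∀ (i j k l : ℕ) (a b : A),
    emb i j a * emb k l b = if j = k then emb i l (a * b) else 0
  emb_star : ∀ (i j : ℕ) (a : A), star (emb i j a) = emb j i (star a)
  norm_emb : ∀ (i j : ℕ) (a : A), ‖emb i j a‖ = ‖a‖
  dense_span : Dense (Submodule.span ℂ {w : W | ∃ (i j : ℕ) (a : A), w = emb i j a} : Set W)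

variable {A W}

/-- The set `QT(A)` of quasitraces normalized on `A ⊆ A ⊗ K`. -/
def QTSet (SB : Stabilization A W) : Set (QuasiTrace W) :=
  {τ | (⨆ a : {a : A // 0 ≤ a ∧ ‖a‖ ≤ 1}, τ.toFun (SB.emb 0 0 a)) = 1}

/-- The quasitraces normalized on the hereditary subalgebra `Her(c) ⊆ W`. -/
def QTSetHer (c : W) : Set (QuasiTrace W) :=
  {τ : QuasiTrace W |
    (⨆ a : {a : W // a ∈ her c ∧ 0 ≤ a ∧ ‖a‖ ≤ 1}, τ.toFun a) = 1}

/-- `ω(a) = 0` for `a ∈ W = A ⊗ K`, computed relative to `\overline{QT(Her(e))}^w`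
for any nonzero `e ∈ Ped(A)₊`. -/
def OmegaZero (SB : Stabilization A W) (a : W) : Prop :=
  ∀ e : A, 0 ≤ e → e ≠ 0 → e ∈ pedersen A →
    omegaOn (closure (QTSetHer (SB.emb 0 0 e))) a = 0

/-- `A` has tracial approximate oscillation zero. -/
def TAOZ (SB : Stabilization A W) : Prop :=
  ∀ e : A, 0 ≤ e → e ≠ 0 → e ∈ pedersen A →
    ∀ a : W, 0 ≤ a → a ∈ pedersen W →
      ∃ b : ℕ → W, (∀ n, 0 ≤ b n) ∧ (∀ n, ‖b n‖ ≤ 1) ∧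
        (∀ n, b n ∈ pedersenIn (her a)) ∧
        Tendsto (fun n => omegaOn (closure (QTSetHer (SB.emb 0 0 e))) (b n)) atTop (𝓝 0) ∧
        Tendsto (fun n => norm2On (closure (QTSetHer (SB.emb 0 0 e))) (a - b n)) atTop (𝓝 0)

/-! ### Affine functions on the quasitrace cone and the map `Γ` -/

variable (W) in
/-- `ρ = t·τ + (1-t)·σ` as quasitraces. -/
def IsCombo (t : ℝ) (τ σ ρ : QuasiTrace W) : Prop :=
  ∀ a : W, 0 ≤ a →
    ρ.toFun a = ENNReal.ofReal t * τ.toFun a + ENNReal.ofReal (1 - t) * σ.toFun a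

variable (W) in
/-- `f` is affine on the quasitrace cone. -/
def IsAffineQT (f : QuasiTrace W → ℝ≥0∞) : Prop :=
  ∀ t : ℝ, 0 ≤ t → t ≤ 1 → ∀ τ σ ρ : QuasiTrace W, IsCombo W t τ σ ρ →
    f ρ = ENNReal.ofReal t * f τ + ENNReal.ofReal (1 - t) * f σ

variable (W) in
/-- Membership in `Aff₊(QT̃(A))`. -/
def MemAffPlus (f : QuasiTrace W → ℝ≥0∞) : Prop :=
  (∀ τ, f τ = 0) ∨
    (Continuous f ∧ IsAffineQT W f ∧ (∀ τ, f τ < ∞) ∧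
      (∀ τ : QuasiTrace W, ¬ τ.IsZero → 0 < f τ) ∧
      (∀ τ : QuasiTrace W, τ.IsZero → f τ = 0))

variable (W) in
/-- Membership in `LAff₊(QT̃(A))`. -/
def MemLAffPlus (f : QuasiTrace W → ℝ≥0∞) : Prop :=
  ∃ g : ℕ → QuasiTrace W → ℝ≥0∞, (∀ n, MemAffPlus W (g n)) ∧
    (∀ n τ, g n τ ≤ g (n + 1) τ) ∧ ∀ τ, f τ = ⨆ n, g n τ

variable (W) in
/-- The canonical map `Γ : Cu(A) → LAff₊(QT̃(A))`, `Γ([a])(τ) = d_τ(a)`, is surjective. -/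
def GammaSurjective : Prop :=
  ∀ f : QuasiTrace W → ℝ≥0∞, MemLAffPlus W f →
    ∃ a : W, 0 ≤ a ∧ ∀ τ : QuasiTrace W, dTau τ a = f τ


section Generic
set_option linter.unusedSectionVars false

variable {B : Type*} [NonUnitalCStarAlgebra B] [PartialOrder B] [StarOrderedRing B]

lemma intertwine (f : ℝ → ℝ) (hf : Continuous f) (hf0 : f 0 = 0) (y : B) :
    y * cfcₙ f (star y * y) = cfcₙ f (y * star y) * y := by
  have ha : IsSelfAdjoint (star y * y) := .star_mul_self y
  have hb : IsSelfAdjoint (y * star y) := .mul_star_self y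
  set s : Set ℝ := quasispectrum ℝ (star y * y) with hs
  have hs1 : quasispectrum ℝ (star y * y) ⊆ s := le_rfl
  have hs2 : quasispectrum ℝ (y * star y) ⊆ s := by
    rw [hs, quasispectrum.mul_comm]
  have : Fact (0 ∈ s) := ⟨quasispectrum.zero_mem ℝ _⟩
  have : CompactSpace s := isCompact_iff_compactSpace.mp
    (NonUnitalContinuousFunctionalCalculus.isCompact_quasispectrum (R := ℝ) (star y * y))
  have key : ∀ F : ContinuousMapZero s ℝ,
      y * cfcₙHomSuperset ha hs1 F = cfcₙHomSuperset hb hs2 F * y := by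
    intro F
    induction F using ContinuousMapZero.induction_on_of_compact with
    | zero => rw [map_zero, map_zero]; simp
    | smul r f hf => rw [map_smul, map_smul, mul_smul_comm, smul_mul_assoc, hf]
    | id => rw [cfcₙHomSuperset_id, cfcₙHomSuperset_id, mul_assoc]
    | star_id =>
      rw [map_star, map_star, cfcₙHomSuperset_id, cfcₙHomSuperset_id]
      simp [mul_assoc]
    | add f g hf hg => rw [map_add, map_add, mul_add, add_mul, hf, hg]
    | mul f g hf hg =>
      rw [map_mul, map_mul, ← mul_assoc, hf, mul_assoc, hg, mul_assoc]
    | frequently f hf =>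
      have hcl : IsClosed {F : ContinuousMapZero s ℝ |
          y * cfcₙHomSuperset ha hs1 F = cfcₙHomSuperset hb hs2 F * y} := by
        refine isClosed_eq ?_ ?_
        · exact continuous_const.mul (cfcₙHomSuperset_continuous ha hs1)
        · exact (cfcₙHomSuperset_continuous hb hs2).mul continuous_const
      exact hcl.closure_subset (mem_closure_iff_frequently.mpr hf)
  have := key ⟨⟨_, hf.continuousOn.domRestrict⟩, hf0⟩
  rw [cfcₙ_apply f (star y * y) hf.continuousOn hf0 ha,
    cfcₙ_apply f (y * star y) hf.continuousOn hf0 hb]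
  exact this

/-- Algebraic part of the definition of a quasitrace. -/
structure PQT (φ : B → ℝ≥0∞) : Prop where
  zero : φ 0 = 0
  smul : ∀ (r : ℝ) (a : B), 0 < r → 0 ≤ a → φ (r • a) = ENNReal.ofReal r * φ a
  add : ∀ a b : B, 0 ≤ a → 0 ≤ b → a * b = b * a → φ (a + b) = φ a + φ b
  tr : ∀ x : B, φ (star x * x) = φ (x * star x)

lemma PQT.mono_comm {φ : B → ℝ≥0∞} (h : PQT φ) {u v : B} (hu : 0 ≤ u) (huv : u ≤ v)
    (hc : u * v = v * u) : φ u ≤ φ v := by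
  have := h.add u (v - u) hu (sub_nonneg.mpr huv) (by rw [mul_sub, sub_mul, hc])
  rw [add_sub_cancel] at this
  rw [this]; exact le_self_add

lemma qs_bound {x : B} (hx : 0 ≤ x) {t : ℝ} (ht : t ∈ quasispectrum ℝ x) : 0 ≤ t ∧ t ≤ ‖x‖ := by
  refine ⟨quasispectrum_nonneg_of_nonneg x hx t ht, ?_⟩
  have := norm_apply_le_norm_cfcₙ (fun t : ℝ => t) x ht (by fun_prop) rfl (.of_nonneg hx)
  rw [cfcₙ_id' ℝ x (.of_nonneg hx)] at this
  exact (le_abs_self t).trans this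

lemma PQT.mono_cfc {φ : B → ℝ≥0∞} (h : PQT φ) {x : B} (hx : 0 ≤ x) {f g : ℝ → ℝ}
    (hf : Continuous f) (hf0 : f 0 = 0) (hg : Continuous g) (hg0 : g 0 = 0)
    (h0 : ∀ t, 0 ≤ t → t ≤ ‖x‖ → 0 ≤ f t) (hle : ∀ t, 0 ≤ t → t ≤ ‖x‖ → f t ≤ g t) :
    φ (cfcₙ f x) ≤ φ (cfcₙ g x) := by
  have hsp : ∀ t ∈ quasispectrum ℝ x, 0 ≤ t ∧ t ≤ ‖x‖ := fun t ht => qs_bound hx ht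
  refine h.mono_comm (cfcₙ_nonneg fun t ht => h0 t (hsp t ht).1 (hsp t ht).2) ?_
    (cfcₙ_commute_cfcₙ f g x)
  exact cfcₙ_mono (fun t ht => hle t (hsp t ht).1 (hsp t ht).2) hf.continuousOn hg.continuousOn

lemma PQT.add_cfc {φ : B → ℝ≥0∞} (h : PQT φ) {x : B} (hx : 0 ≤ x) {f g : ℝ → ℝ}
    (hf : Continuous f) (hf0 : f 0 = 0) (hg : Continuous g) (hg0 : g 0 = 0)
    (h0 : ∀ t, 0 ≤ t → 0 ≤ f t) (h1 : ∀ t, 0 ≤ t → 0 ≤ g t) :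
    φ (cfcₙ (fun t => f t + g t) x) = φ (cfcₙ f x) + φ (cfcₙ g x) := by
  have hsp : ∀ t ∈ quasispectrum ℝ x, 0 ≤ t := fun t ht =>
    quasispectrum_nonneg_of_nonneg x hx t ht
  rw [cfcₙ_add f g x hf.continuousOn hf0 hg.continuousOn hg0]
  exact h.add _ _ (cfcₙ_nonneg fun t ht => h0 t (hsp t ht))
    (cfcₙ_nonneg fun t ht => h1 t (hsp t ht)) (cfcₙ_commute_cfcₙ f g x)

lemma PQT.trace_cfc {φ : B → ℝ≥0∞} (h : PQT φ) (y : B) {f : ℝ → ℝ} {ε : ℝ} (hε : 0 < ε)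
    (hf : Continuous f) (hf0 : ∀ t ≤ ε, f t = 0) (h0 : ∀ t, 0 ≤ f t) :
    φ (cfcₙ f (star y * y)) = φ (cfcₙ f (y * star y)) := by
  set g : ℝ → ℝ := fun t => f t / max t ε with hg
  have hmax : ∀ t : ℝ, 0 < max t ε := fun t => lt_max_of_lt_right hε
  have hgc : Continuous g := hf.div (by fun_prop) (fun t => (hmax t).ne')
  have hg0 : g 0 = 0 := by simp [hg, hf0 0 hε.le]
  have hgn : ∀ t, 0 ≤ g t := fun t => div_nonneg (h0 t) (hmax t).le
  have htg : ∀ t, t * g t = f t := by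
    intro t
    rcases le_or_gt t ε with ht | ht
    · simp [hg, hf0 t ht]
    · simp only [hg, max_eq_left ht.le]; field_simp [(hε.trans ht).ne']
  set k : ℝ → ℝ := fun t => Real.sqrt (g t) with hk
  have hkc : Continuous k := hgc.sqrt
  have hk0 : k 0 = 0 := by simp [hk, hg0]
  have hkk : ∀ t, k t * k t = g t := fun t => Real.mul_self_sqrt (hgn t)
  have ha : IsSelfAdjoint (star y * y) := .star_mul_self y
  have hb : IsSelfAdjoint (y * star y) := .mul_star_self y
  have hka : IsSelfAdjoint (cfcₙ k (star y * y)) := cfcₙ_predicate k _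
  set w := y * cfcₙ k (star y * y) with hw
  have e1 : star w * w = cfcₙ f (star y * y) := by
    rw [hw, star_mul, hka.star_eq]
    have : f = fun t => (k t * t) * k t := by
      ext t; rw [← htg t, ← hkk t]; ring
    rw [this, cfcₙ_mul (fun t => k t * t) k _ (by fun_prop) (by simp) (by fun_prop) hk0,
      cfcₙ_mul k (fun t => t) _ (by fun_prop) hk0 (by fun_prop) rfl, cfcₙ_id' ℝ (star y * y) ha]
    simp only [mul_assoc]
  have e2 : w * star w = cfcₙ f (y * star y) := by
    have : f = fun t => (k t * k t) * t := by
      ext t; rw [hkk t, ← htg t]; ring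
    rw [this, cfcₙ_mul (fun t => k t * k t) (fun t => t) _ (by fun_prop) (by simp [hk0])
      (by fun_prop) rfl, cfcₙ_id' ℝ (y * star y) hb,
      cfcₙ_mul k k _ (by fun_prop) hk0 (by fun_prop) hk0]
    have h1 := intertwine k hkc hk0 y
    have h2 : cfcₙ k (star y * y) * star y = star y * cfcₙ k (y * star y) := by
      have := congrArg star h1
      have hkb : IsSelfAdjoint (cfcₙ k (y * star y)) := cfcₙ_predicate k _
      rwa [star_mul, star_mul, hka.star_eq, hkb.star_eq] at this
    have h3 : y * star y * cfcₙ k (y * star y) = cfcₙ k (y * star y) * (y * star y) :=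
      ((Commute.refl (y * star y)).cfcₙ_real k).eq.symm
    rw [hw, h1, star_mul, ← h1]
    have hkb : IsSelfAdjoint (cfcₙ k (y * star y)) := cfcₙ_predicate k _
    calc y * cfcₙ k (star y * y) * (star (y) * star (cfcₙ k (y * star y)))
        = cfcₙ k (y * star y) * (y * star y * cfcₙ k (y * star y)) := by
          rw [h1, hkb.star_eq]; simp only [mul_assoc]
      _ = _ := by rw [h3]; simp only [mul_assoc]
  rw [← e1, ← e2, h.tr]

lemma pair_cfc {x y : B} (hx : 0 ≤ x) (hy : 0 ≤ y) (hc : x * y = y * x) :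
    ∃ z : B, IsStarNormal z ∧ (∀ w ∈ quasispectrum ℂ z, 0 ≤ w.re ∧ 0 ≤ w.im) ∧
      (∀ f : ℝ → ℝ, Continuous f → f 0 = 0 →
        cfcₙ f x = cfcₙ (fun w : ℂ => (f w.re : ℂ)) z) ∧
      (∀ f : ℝ → ℝ, Continuous f → f 0 = 0 →
        cfcₙ f y = cfcₙ (fun w : ℂ => (f w.im : ℂ)) z) ∧
      (∀ f : ℝ → ℝ, Continuous f → f 0 = 0 →
        cfcₙ f (x + y) = cfcₙ (fun w : ℂ => (f (w.re + w.im) : ℂ)) z) := by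
  have hxs : IsSelfAdjoint x := .of_nonneg hx
  have hys : IsSelfAdjoint y := .of_nonneg hy
  set z : B := x + Complex.I • y with hz
  have hzs : star z = x - Complex.I • y := by
    rw [hz, star_add, star_smul, hxs.star_eq, hys.star_eq]; simp [sub_eq_add_neg]
  have hn : IsStarNormal z := by
    constructor
    rw [hzs, hz]
    show (x - Complex.I • y) * (x + Complex.I • y) = (x + Complex.I • y) * (x - Complex.I • y)
    simp only [sub_mul, mul_add, add_mul, mul_sub, smul_mul_assoc, mul_smul_comm, hc, smul_sub, smul_add, smul_smul]
    abel
  have hre : cfcₙ (fun w : ℂ => (w.re : ℂ)) z = x := by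
    rw [cfcₙ_re_id z, realPart_apply_coe, hzs, hz]
    simp only [add_add_sub_cancel, ← two_smul ℝ x, smul_smul]; norm_num
  have him : cfcₙ (fun w : ℂ => (w.im : ℂ)) z = y := by
    rw [cfcₙ_im_id z, imaginaryPart_apply_coe, hzs, hz]
    simp only [add_sub_sub_cancel, ← two_smul ℂ (Complex.I • y), smul_smul]
    rw [smul_comm, smul_smul, ← Complex.coe_smul, smul_smul]
    have : ((2⁻¹ : ℝ) : ℂ) * (-Complex.I * (2 * Complex.I)) = 1 := by
      push_cast; linear_combination (-1 : ℂ) * Complex.I_sq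
    rw [this, one_smul]
  have cont1 : ∀ u : ℂ → ℝ, Continuous u → Continuous (fun w => (u w : ℂ)) := fun u hu =>
    Complex.continuous_ofReal.comp hu
  have hcomp : ∀ (u : ℂ → ℝ), Continuous u → u 0 = 0 → ∀ f : ℝ → ℝ, Continuous f → f 0 = 0 →
      IsSelfAdjoint (cfcₙ (fun w : ℂ => (u w : ℂ)) z) →
      cfcₙ f (cfcₙ (fun w : ℂ => (u w : ℂ)) z) = cfcₙ (fun w : ℂ => (f (u w) : ℂ)) z := by
    intro u hu hu0 f hf hf0 hsa
    rw [cfcₙ_real_eq_complex f hsa]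
    rw [← cfcₙ_comp' (fun w : ℂ => (f w.re : ℂ)) (fun w : ℂ => (u w : ℂ)) z
      (cont1 _ (by fun_prop)).continuousOn (by simp [hf0]) (cont1 u hu).continuousOn (by simp [hu0])]
    simp
  refine ⟨z, hn, ?_, ?_, ?_, ?_⟩
  · intro w hw
    constructor
    · have : (w.re : ℂ) ∈ quasispectrum ℂ x := by
        rw [← hre, cfcₙ_map_quasispectrum (fun w : ℂ => (w.re : ℂ)) z
          (cont1 _ Complex.continuous_re).continuousOn (by simp)]
        exact ⟨w, hw, rfl⟩
      have h2 : w.re ∈ quasispectrum ℝ x := by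
        have := hxs.quasispectrumRestricts.apply_mem this
        simpa using this
      exact quasispectrum_nonneg_of_nonneg x hx _ h2
    · have : (w.im : ℂ) ∈ quasispectrum ℂ y := by
        rw [← him, cfcₙ_map_quasispectrum (fun w : ℂ => (w.im : ℂ)) z
          (cont1 _ Complex.continuous_im).continuousOn (by simp)]
        exact ⟨w, hw, rfl⟩
      have h2 : w.im ∈ quasispectrum ℝ y := by
        have := hys.quasispectrumRestricts.apply_mem this
        simpa using this
      exact quasispectrum_nonneg_of_nonneg y hy _ h2
  · intro f hf hf0
    have := hcomp Complex.re Complex.continuous_re rfl f hf hf0 (by rw [hre]; exact hxs)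
    rwa [hre] at this
  · intro f hf hf0
    have := hcomp Complex.im Complex.continuous_im rfl f hf hf0 (by rw [him]; exact hys)
    rwa [him] at this
  · intro f hf hf0
    have hs : cfcₙ (fun w : ℂ => ((w.re + w.im : ℝ) : ℂ)) z = x + y := by
      simp only [Complex.ofReal_add]
      rw [cfcₙ_add (fun w : ℂ => (w.re : ℂ)) (fun w : ℂ => (w.im : ℂ)) z
        (cont1 _ Complex.continuous_re).continuousOn (by simp)
        (cont1 _ Complex.continuous_im).continuousOn (by simp), hre, him]
    have := hcomp (fun w => w.re + w.im) (by fun_prop) (by simp) f hf hf0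
      (by rw [hs]; exact hxs.add hys)
    rwa [hs] at this

end Generic

section Generic2
set_option linter.unusedSectionVars false

variable {B : Type*} [NonUnitalCStarAlgebra B] [PartialOrder B] [StarOrderedRing B]

open scoped ComplexOrder in
lemma cfcC_mono {z : B} {u v : ℂ → ℝ} (hu : Continuous u)
    (hv : Continuous v) (hu0 : u 0 = 0) (hv0 : v 0 = 0) (h : ∀ w ∈ quasispectrum ℂ z, u w ≤ v w) :
    cfcₙ (fun w => (u w : ℂ)) z ≤ cfcₙ (fun w => (v w : ℂ)) z := by
  refine cfcₙ_mono (fun w hw => ?_) (Complex.continuous_ofReal.comp hu).continuousOn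
    (Complex.continuous_ofReal.comp hv).continuousOn (by simp [hu0]) (by simp [hv0])
  exact Complex.real_le_real.mpr (h w hw)

/-- `(x - ε)₊`. -/
def cut (ε : ℝ) (x : B) : B := cfcₙ (fun t => max (t - ε) 0) x

lemma cut_nonneg (ε : ℝ) (x : B) : 0 ≤ cut ε x := cfcₙ_nonneg fun _ _ => le_max_right _ _

lemma fEps_nonneg (ε : ℝ) (x : B) : 0 ≤ fEps ε x :=
  cfcₙ_nonneg fun _ _ => le_min zero_le_one (le_max_left _ _)

lemma cutoff_cont (ε : ℝ) : Continuous (cutoff ε) := by unfold cutoff; fun_prop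

lemma cutoff_zero (ε : ℝ) : cutoff ε 0 = 0 := by simp [cutoff]

lemma cutoff_nonneg (ε t : ℝ) : 0 ≤ cutoff ε t := le_min zero_le_one (le_max_left _ _)

lemma cutoff_le_one (ε t : ℝ) : cutoff ε t ≤ 1 := min_le_left _ _

lemma cutoff_eq_one {ε t : ℝ} (hε : 0 < ε) (h : ε ≤ t) : cutoff ε t = 1 := by
  unfold cutoff
  have : 1 ≤ 2 * t / ε - 1 := by
    rw [le_sub_iff_add_le, le_div_iff₀ hε]; linarith
  rw [max_eq_right (by linarith), min_eq_left this]

lemma cutoff_eq_zero {ε t : ℝ} (hε : 0 < ε) (h : t ≤ ε / 2) : cutoff ε t = 0 := by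
  unfold cutoff
  have : 2 * t / ε - 1 ≤ 0 := by
    rw [sub_nonpos, div_le_iff₀ hε]; linarith
  rw [max_eq_left this, min_eq_right zero_le_one]

lemma fEps_norm_le (ε : ℝ) (x : B) : ‖fEps ε x‖ ≤ 1 :=
  norm_cfcₙ_le fun t _ => by
    rw [Real.norm_eq_abs, abs_of_nonneg (cutoff_nonneg _ _)]; exact cutoff_le_one _ _

lemma cut_mono {x : B} {ε δ : ℝ} (h0 : 0 ≤ δ) (h : δ ≤ ε) : cut ε x ≤ cut δ x :=
  cfcₙ_mono (fun t _ => max_le_max (by linarith) le_rfl) (by fun_prop) (by fun_prop)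
    (by simp; linarith) (by simp; linarith)

lemma PQT.cut_mono {φ : B → ℝ≥0∞} (h : PQT φ) {x : B} {ε δ : ℝ} (h0 : 0 ≤ δ) (hδ : δ ≤ ε) :
    φ (cut ε x) ≤ φ (cut δ x) :=
  h.mono_comm (cut_nonneg _ _) (Paper.cut_mono h0 hδ) (cfcₙ_commute_cfcₙ _ _ _)

/-- Lower semicontinuous regularization. -/
def reg (φ : B → ℝ≥0∞) (x : B) : ℝ≥0∞ :=
  open Classical in if 0 ≤ x then ⨆ (ε : ℝ) (_ : 0 < ε), φ (cut ε x) else 0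

lemma reg_eq {φ : B → ℝ≥0∞} {x : B} (hx : 0 ≤ x) :
    reg φ x = ⨆ (ε : ℝ) (_ : 0 < ε), φ (cut ε x) := by simp [reg, hx]

lemma cut_smul {r ε : ℝ} (hr : 0 < r) {x : B} (hx : 0 ≤ x) (hε : 0 < ε) :
    cut ε (r • x) = r • cut (ε / r) x := by
  have hs : IsSelfAdjoint x := .of_nonneg hx
  unfold cut
  rw [← cfcₙ_smul r _ x (by fun_prop) (by simp; positivity)]
  rw [← cfcₙ_comp_smul r (fun t => max (t - ε) 0) x (by fun_prop) (by simp; positivity)]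
  congr 1; ext t
  simp only [smul_eq_mul]
  rw [mul_max_of_nonneg _ _ hr.le, mul_sub, mul_zero, mul_div_cancel₀ _ hr.ne']

lemma PQT.reg {φ : B → ℝ≥0∞} (h : PQT φ) : PQT (reg φ) where
  zero := by
    rw [reg_eq le_rfl]; simp [cut, h.zero]
  smul r a hr ha := by
    rw [reg_eq (smul_nonneg hr.le ha), reg_eq ha]
    simp only [ENNReal.mul_iSup]
    apply le_antisymm
    · refine iSup₂_le fun ε hε => ?_
      rw [cut_smul hr ha hε, h.smul r _ hr (cut_nonneg _ _)]
      exact le_iSup₂_of_le (ε / r) (by positivity) le_rfl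
    · refine iSup₂_le fun ε hε => ?_
      refine le_iSup₂_of_le (r * ε) (by positivity) ?_
      rw [cut_smul hr ha (by positivity), h.smul r _ hr (cut_nonneg _ _),
        mul_div_cancel_left₀ _ hr.ne']
  add x y hx hy hc := by
    obtain ⟨z, hz, hsp, h1, h2, h3⟩ := pair_cfc hx hy hc
    rw [reg_eq (add_nonneg hx hy), reg_eq hx, reg_eq hy]
    have hc0 : ∀ ε : ℝ, 0 < ε → (fun t : ℝ => max (t - ε) 0) 0 = 0 := by
      intro ε hε; simp; exact hε.le
    have hsum : ∀ ε : ℝ, 0 < ε → cut ε x + cut ε y =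
        cfcₙ (fun w : ℂ => ((max (w.re - ε) 0 + max (w.im - ε) 0 : ℝ) : ℂ)) z := by
      intro ε hε
      simp only [Complex.ofReal_add]
      rw [cfcₙ_add (fun w : ℂ => ((max (w.re - ε) 0 : ℝ) : ℂ))
        (fun w : ℂ => ((max (w.im - ε) 0 : ℝ) : ℂ)) z (by fun_prop) (by simpa using hε.le)
        (by fun_prop) (by simpa using hε.le)]
      unfold cut
      rw [h1 (fun t : ℝ => max (t - ε) 0) (by fun_prop) (hc0 ε hε),
        h2 (fun t : ℝ => max (t - ε) 0) (by fun_prop) (hc0 ε hε)]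
    have hxy : ∀ ε : ℝ, 0 < ε → φ (cut ε x + cut ε y) = φ (cut ε x) + φ (cut ε y) := by
      intro ε hε
      refine h.add _ _ (cut_nonneg _ _) (cut_nonneg _ _) ?_
      unfold cut
      rw [h1 (fun t : ℝ => max (t - ε) 0) (by fun_prop) (hc0 ε hε),
        h2 (fun t : ℝ => max (t - ε) 0) (by fun_prop) (hc0 ε hε)]
      exact cfcₙ_commute_cfcₙ _ _ _
    have hs3 : ∀ ε : ℝ, 0 < ε → cut ε (x + y) =
        cfcₙ (fun w : ℂ => ((max (w.re + w.im - ε) 0 : ℝ) : ℂ)) z := fun ε hε =>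
      h3 (fun t : ℝ => max (t - ε) 0) (by fun_prop) (hc0 ε hε)
    apply le_antisymm
    · refine iSup₂_le fun ε hε => ?_
      have hε2 : 0 < ε / 2 := by positivity
      refine le_trans ?_ (add_le_add (le_iSup₂_of_le (ε / 2) hε2 le_rfl)
        (le_iSup₂_of_le (ε / 2) hε2 le_rfl))
      rw [← hxy _ hε2]
      refine h.mono_comm (cut_nonneg _ _) ?_ ?_
      · rw [hs3 ε hε, hsum _ hε2]
        refine cfcC_mono (by fun_prop) (by fun_prop) ?_ ?_ fun w hw => ?_
        · simp; positivity
        · simp; positivity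
        obtain ⟨hr, hi⟩ := hsp w hw
        refine max_le ?_ (by positivity)
        linarith [le_max_left (w.re - ε / 2) 0, le_max_left (w.im - ε / 2) 0]
      · rw [hs3 ε hε, hsum _ hε2]; exact cfcₙ_commute_cfcₙ _ _ _
    · simp only [iSup_subtype']
      have : Nonempty {ε : ℝ // 0 < ε} := ⟨⟨1, one_pos⟩⟩
      refine ENNReal.iSup_add_iSup_le ?_
      · intro i j
        have hm : 0 < min i.1 j.1 := lt_min i.2 j.2
        refine le_trans (add_le_add (h.cut_mono hm.le (min_le_left i.1 j.1))
          (h.cut_mono hm.le (min_le_right i.1 j.1))) ?_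
        rw [← hxy _ hm]
        refine le_iSup_of_le ⟨_, hm⟩ (h.mono_comm (add_nonneg (cut_nonneg _ _) (cut_nonneg _ _)) ?_ ?_)
        · rw [hs3 _ hm, hsum _ hm]
          refine cfcC_mono (by fun_prop) (by fun_prop) ?_ ?_ fun w hw => ?_
          · have := hm.le
            simpa using this
          · have := hm.le
            simpa using this
          obtain ⟨hr, hi⟩ := hsp w hw
          rcases le_total (w.re - min i.1 j.1) 0 with h1 | h1 <;>
          rcases le_total (w.im - min i.1 j.1) 0 with h2 | h2 <;>
          simp only [h1, h2, max_eq_left, max_eq_right] <;>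
          first | (refine le_trans ?_ (le_max_left _ _); linarith) | (refine le_trans ?_ (le_max_right _ _); linarith)
        · rw [hs3 _ hm, hsum _ hm]; exact cfcₙ_commute_cfcₙ _ _ _
  tr x := by
    rw [reg_eq (star_mul_self_nonneg x), reg_eq (mul_star_self_nonneg x)]
    refine iSup_congr fun ε => iSup_congr fun hε => ?_
    exact h.trace_cfc x hε (by fun_prop) (fun t ht => max_eq_right (by linarith))
      (fun t => le_max_right _ _)

lemma cfc_orth {x y : B} (hx : 0 ≤ x) (hy : 0 ≤ y) (hxy : x * y = 0) {f : ℝ → ℝ}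
    (hf : Continuous f) (hf0 : f 0 = 0) : cfcₙ f (x + y) = cfcₙ f x + cfcₙ f y := by
  have hyx : y * x = 0 := by
    have := congrArg star hxy
    rwa [star_mul, (IsSelfAdjoint.of_nonneg hx).star_eq, (IsSelfAdjoint.of_nonneg hy).star_eq,
      star_zero] at this
  obtain ⟨z, hz, hsp, h1, h2, h3⟩ := pair_cfc hx hy (hxy.trans hyx.symm)
  have e1 := h1 (fun t => t) continuous_id rfl
  have e2 := h2 (fun t => t) continuous_id rfl
  rw [cfcₙ_id' ℝ _ (.of_nonneg hx)] at e1
  rw [cfcₙ_id' ℝ _ (.of_nonneg hy)] at e2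
  have e3 : cfcₙ (fun w : ℂ => (w.re : ℂ) * (w.im : ℂ)) z = cfcₙ (fun _ : ℂ => 0) z := by
    rw [cfcₙ_mul (fun w : ℂ => (w.re : ℂ)) (fun w : ℂ => (w.im : ℂ)) z (by fun_prop) (by simp)
      (by fun_prop) (by simp), ← e1, ← e2, hxy, cfcₙ_const_zero]
  have e4 := eqOn_of_cfcₙ_eq_cfcₙ e3 hz (by fun_prop) (by simp) (by fun_prop) rfl
  rw [h1 f hf hf0, h2 f hf hf0, h3 f hf hf0]
  rw [← cfcₙ_add (fun w : ℂ => (f w.re : ℂ)) (fun w : ℂ => (f w.im : ℂ)) z (by fun_prop)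
    (by simp [hf0]) (by fun_prop) (by simp [hf0])]
  refine cfcₙ_congr fun w hw => ?_
  have : (w.re : ℂ) * (w.im : ℂ) = 0 := e4 hw
  rcases mul_eq_zero.mp this with h | h
  · have : w.re = 0 := by exact_mod_cast h
    simp [this, hf0]
  · have : w.im = 0 := by exact_mod_cast h
    simp [this, hf0]

end Generic2

section Generic3
set_option linter.unusedSectionVars false

variable {B : Type*} [NonUnitalCStarAlgebra B] [PartialOrder B] [StarOrderedRing B]

lemma norm_cfc_sub_le {x : B} (hx : 0 ≤ x) {f g : ℝ → ℝ} {C : ℝ} (hf : Continuous f) (hf0 : f 0 = 0)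
    (hg : Continuous g) (hg0 : g 0 = 0) (h : ∀ t, 0 ≤ t → t ≤ ‖x‖ → |f t - g t| ≤ C) :
    ‖cfcₙ f x - cfcₙ g x‖ ≤ C := by
  rw [← cfcₙ_sub f g x hf.continuousOn hf0 hg.continuousOn hg0]
  exact norm_cfcₙ_le fun t ht => h t (qs_bound hx ht).1 (qs_bound hx ht).2

lemma sq_le_self {E : B} (hE : 0 ≤ E) (hE1 : ‖E‖ ≤ 1) : E * E ≤ E := by
  have hs : IsSelfAdjoint E := .of_nonneg hE
  have e1 : E * E = cfcₙ (fun t : ℝ => t * t) E := by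
    rw [cfcₙ_mul (fun t : ℝ => t) (fun t => t) E, cfcₙ_id' ℝ E]
  conv_rhs => rw [← cfcₙ_id' ℝ E]
  rw [e1]
  refine cfcₙ_mono fun t ht => ?_
  have := qs_bound hE ht
  nlinarith

lemma cfc_unit {x : B} (hx : 0 ≤ x) {u g : ℝ → ℝ} (hu : Continuous u) (hu0 : u 0 = 0)
    (hg : Continuous g) (hg0 : g 0 = 0) (h : ∀ t, 0 ≤ t → t ≤ ‖x‖ → u t * g t = g t) :
    cfcₙ u x * cfcₙ g x = cfcₙ g x := by
  rw [← cfcₙ_mul u g x hu.continuousOn hu0 hg.continuousOn hg0]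
  exact cfcₙ_congr fun t ht => h t (qs_bound hx ht).1 (qs_bound hx ht).2

lemma factor_cfc {x : B} (hx : 0 ≤ x) {f : ℝ → ℝ} (hf : Continuous f) {ε : ℝ} (hε : 0 < ε)
    (hf0 : ∀ t ≤ ε, f t = 0) : ∃ g : ℝ → ℝ, Continuous g ∧ (∀ t ≤ ε, g t = 0) ∧
      cfcₙ f x = x * cfcₙ g x ∧ cfcₙ f x = cfcₙ g x * x := by
  have hs : IsSelfAdjoint x := .of_nonneg hx
  have hmax : ∀ t : ℝ, 0 < max t ε := fun t => lt_max_of_lt_right hε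
  have hgc : Continuous (fun t => f t / max t ε) := hf.div (by fun_prop) (fun t => (hmax t).ne')
  have hg0 : ∀ t ≤ ε, f t / max t ε = 0 := fun t ht => by simp [hf0 t ht]
  have htg : ∀ t, t * (f t / max t ε) = f t := by
    intro t
    rcases le_or_gt t ε with ht | ht
    · simp [hf0 t ht]
    · simp only [max_eq_left ht.le]; field_simp [(hε.trans ht).ne']
  refine ⟨fun t => f t / max t ε, hgc, hg0, ?_, ?_⟩
  · have := cfcₙ_mul (fun t : ℝ => t) (fun t => f t / max t ε) x (by fun_prop) rfl hgc.continuousOn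
      (hg0 0 hε.le)
    rw [cfcₙ_id' ℝ x] at this
    rw [← this]; simp only [htg]
  · have := cfcₙ_mul (fun t => f t / max t ε) (fun t : ℝ => t) x hgc.continuousOn
      (hg0 0 hε.le) (by fun_prop) rfl
    rw [cfcₙ_id' ℝ x] at this
    rw [← this]; simp only [mul_comm _ (_ : ℝ), htg]

lemma unit_cfc {x E : B} (hx : 0 ≤ x) (hE : E * x = x) {f : ℝ → ℝ} (hf : Continuous f) {ε : ℝ}
    (hε : 0 < ε) (hf0 : ∀ t ≤ ε, f t = 0) : E * cfcₙ f x = cfcₙ f x := by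
  obtain ⟨g, -, -, h1, -⟩ := factor_cfc hx hf hε hf0
  rw [h1, ← mul_assoc, hE]

lemma PQT.unit_le {φ : B → ℝ≥0∞} (h : PQT φ) {E f : B} (hE : 0 ≤ E) (hE1 : ‖E‖ ≤ 1)
    (hf : 0 ≤ f) {C : ℝ} (hC : 0 < C) (hfC : ‖f‖ ≤ C) (hEf : E * f = f) :
    φ f ≤ ENNReal.ofReal C * φ E := by
  have hEs : IsSelfAdjoint E := .of_nonneg hE
  have hfs : IsSelfAdjoint f := .of_nonneg hf
  have hfE : f * E = f := by
    have := congrArg star hEf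
    rwa [star_mul, hEs.star_eq, hfs.star_eq] at this
  rw [← h.smul C E hC hE]
  refine h.mono_comm hf ?_ (by rw [mul_smul_comm, smul_mul_assoc, hEf, hfE])
  calc f = star E * f * E := by rw [hEs.star_eq, hEf, hfE]
    _ ≤ ‖f‖ • (star E * E) := CStarAlgebra.star_left_conjugate_le_norm_smul
    _ ≤ C • (E * E) := by
      rw [hEs.star_eq]
      refine smul_le_smul_of_nonneg_right hfC ?_
      nth_rewrite 1 [← hEs.star_eq]; exact star_mul_self_nonneg E
    _ ≤ C • E := smul_le_smul_of_nonneg_left (sq_le_self hE hE1) hC.le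

lemma QuasiTrace.pqt (τ : QuasiTrace B) : PQT τ.toFun where
  zero := τ.map_zero
  smul := τ.map_smul
  add := τ.map_add_of_commute
  tr := τ.map_star_mul_self

lemma QuasiTrace.le_of_tendsto (τ : QuasiTrace B) {u : ℕ → B} {x : B} (hu : ∀ n, 0 ≤ u n)
    (hx : 0 ≤ x) (h : Tendsto u atTop (𝓝 x)) {C : ℝ≥0∞} (hC : ∀ n, τ.toFun (u n) ≤ C) :
    τ.toFun x ≤ C := by
  by_contra hlt
  push Not at hlt
  have h1 := τ.lowerSemicontinuousOn x hx C hlt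
  have h2 : Tendsto u atTop (𝓝[{a : B | 0 ≤ a}] x) :=
    tendsto_nhdsWithin_iff.mpr ⟨h, Eventually.of_forall hu⟩
  obtain ⟨n, hn⟩ := (h2.eventually h1).exists
  exact absurd (hC n) (not_le.mpr hn)

lemma norm_cut_sub {x : B} (hx : 0 ≤ x) {ε : ℝ} (hε : 0 ≤ ε) : ‖cut ε x - x‖ ≤ ε := by
  have hs : IsSelfAdjoint x := .of_nonneg hx
  conv_lhs => rw [← cfcₙ_id' ℝ x]
  rw [cfcₙ_id' ℝ x]
  have := norm_cfc_sub_le hx (f := fun t => max (t - ε) 0) (g := fun t => t) (C := ε) (by fun_prop)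
    (by simpa using hε) (by fun_prop) rfl (fun t ht _ => by
      rcases le_total (t - ε) 0 with h | h
      · rw [max_eq_right h, abs_le]; constructor <;> linarith
      · rw [max_eq_left h, abs_le]; constructor <;> linarith)
  rwa [cfcₙ_id' ℝ x] at this

lemma tendsto_one_div : Tendsto (fun n : ℕ => (1 : ℝ) / (n + 1)) atTop (𝓝 0) :=
  tendsto_one_div_add_atTop_nhds_zero_nat

lemma tendsto_cut {x : B} (hx : 0 ≤ x) :
    Tendsto (fun n : ℕ => cut (1 / (n + 1)) x) atTop (𝓝 x) := by
  rw [tendsto_iff_norm_sub_tendsto_zero]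
  exact squeeze_zero (fun _ => norm_nonneg _) (fun n => norm_cut_sub hx (by positivity)) tendsto_one_div

lemma QuasiTrace.le_of_cut (τ : QuasiTrace B) {x : B} (hx : 0 ≤ x) {C : ℝ≥0∞}
    (hC : ∀ ε : ℝ, 0 < ε → τ.toFun (cut ε x) ≤ C) : τ.toFun x ≤ C :=
  τ.le_of_tendsto (fun _ => cut_nonneg _ _) hx (tendsto_cut hx) (fun n => hC _ (by positivity))

lemma QuasiTrace.cut_le (τ : QuasiTrace B) {x : B} (hx : 0 ≤ x) {ε : ℝ} (hε : 0 ≤ ε) :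
    τ.toFun (cut ε x) ≤ τ.toFun x := by
  have hs : IsSelfAdjoint x := .of_nonneg hx
  conv_rhs => rw [← cfcₙ_id' ℝ x]
  exact τ.pqt.mono_cfc hx (by fun_prop) (by simpa using hε) (by fun_prop) rfl
    (fun t _ _ => le_max_right _ _) (fun t ht _ => max_le (by linarith) ht)

lemma cutoff_anti {ε δ t : ℝ} (hδ : 0 < δ) (h : δ ≤ ε) (ht : 0 ≤ t) : cutoff ε t ≤ cutoff δ t := by
  unfold cutoff
  refine min_le_min le_rfl (max_le_max le_rfl (sub_le_sub_right ?_ _))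
  exact div_le_div_of_nonneg_left (by positivity) hδ h

lemma PQT.fEps_anti {φ : B → ℝ≥0∞} (h : PQT φ) {x : B} (hx : 0 ≤ x) {ε δ : ℝ} (hδ : 0 < δ) (hδε : δ ≤ ε) :
    φ (fEps ε x) ≤ φ (fEps δ x) :=
  h.mono_cfc hx (cutoff_cont _) (cutoff_zero _) (cutoff_cont _) (cutoff_zero _)
    (fun t _ _ => cutoff_nonneg _ _) (fun t ht _ => cutoff_anti hδ hδε ht)

lemma fEps_le_dTau (τ : QuasiTrace B) {x : B} (hx : 0 ≤ x) {ε : ℝ} (hε : 0 < ε) :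
    τ.toFun (fEps ε x) ≤ dTau τ x := by
  obtain ⟨n, hn⟩ := exists_nat_one_div_lt hε
  exact le_iSup_of_le n (τ.pqt.fEps_anti hx (by positivity) hn.le)

lemma cfc_le_dTau (τ : QuasiTrace B) {x : B} (hx : 0 ≤ x) {f : ℝ → ℝ} (hf : Continuous f) {C : ℝ}
    (hC : 0 < C) (hf0 : f 0 = 0) (h0 : ∀ t, 0 ≤ t → t ≤ ‖x‖ → 0 ≤ f t)
    (h1 : ∀ t, 0 ≤ t → t ≤ ‖x‖ → f t ≤ C) :
    τ.toFun (cfcₙ f x) ≤ ENNReal.ofReal C * dTau τ x := by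
  have hs : IsSelfAdjoint x := .of_nonneg hx
  have hn : 0 ≤ cfcₙ f x := cfcₙ_nonneg fun t ht => h0 t (qs_bound hx ht).1 (qs_bound hx ht).2
  refine τ.le_of_cut hn fun ε hε => ?_
  have e1 : cut ε (cfcₙ f x) = cfcₙ (fun t => max (f t - ε) 0) x := by
    unfold cut
    rw [← cfcₙ_comp' (fun t => max (t - ε) 0) f x (by fun_prop) (by simpa using hε.le)
      hf.continuousOn hf0]
  obtain ⟨δ, hδ, hδ'⟩ := Metric.continuousAt_iff.mp (hf.continuousAt (x := (0 : ℝ))) ε hε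
  have hδ2 : ∀ t, 0 ≤ t → t ≤ δ / 2 → f t ≤ ε := by
    intro t ht htd
    have := hδ' (x := t) (by rw [Real.dist_eq, sub_zero, abs_of_nonneg ht]; linarith)
    rw [hf0, Real.dist_eq, sub_zero] at this
    exact (le_abs_self _).trans this.le
  have hδ3 : 0 < δ / 2 := by positivity
  calc τ.toFun (cut ε (cfcₙ f x)) ≤ τ.toFun (cfcₙ (fun t => C * cutoff (δ / 2) t) x) := by
        rw [e1]
        refine τ.pqt.mono_cfc hx (by fun_prop) (by simpa [hf0] using hε.le)
          (continuous_const.mul (cutoff_cont _)) (by simp [cutoff_zero])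
          (fun t _ _ => le_max_right _ _) (fun t ht htx => ?_)
        rcases le_total t (δ / 2) with h | h
        · refine max_le ?_ (mul_nonneg hC.le (cutoff_nonneg _ _))
          refine le_trans ?_ (mul_nonneg hC.le (cutoff_nonneg _ _))
          linarith [hδ2 t ht h]
        · rw [cutoff_eq_one hδ3 h]
          refine max_le ?_ (by positivity)
          linarith [h1 t ht htx]
    _ = ENNReal.ofReal C * τ.toFun (fEps (δ / 2) x) := by
        rw [← τ.map_smul C _ hC (fEps_nonneg _ _)]
        unfold fEps
        rw [← cfcₙ_smul C (cutoff (δ / 2)) x (cutoff_cont _).continuousOn (cutoff_zero _)]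
        simp
    _ ≤ _ := by gcongr; exact fEps_le_dTau τ hx hδ3

lemma dTau_trace (τ : QuasiTrace B) (y : B) : dTau τ (star y * y) = dTau τ (y * star y) := by
  unfold dTau
  refine iSup_congr fun n => ?_
  have : (0 : ℝ) < 1 / (n + 1) := by positivity
  exact τ.pqt.trace_cfc y (half_pos this) (cutoff_cont _)
    (fun t ht => cutoff_eq_zero this ht) (cutoff_nonneg _)

lemma dTau_of_approx (τ : QuasiTrace B) {b c : B} (hb : 0 ≤ b) (hc : 0 ≤ c)
    (H : Tendsto (fun n : ℕ => fEps (1 / (n + 1)) b * c * fEps (1 / (n + 1)) b) atTop (𝓝 c)) :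
    dTau τ c ≤ dTau τ b := by
  refine iSup_le fun n => ?_
  set δ : ℝ := 1 / (n + 1) with hδ
  have hδ0 : 0 < δ := by positivity
  set e : ℕ → B := fun n => fEps (1 / (n + 1)) b with he
  have hes : ∀ m, IsSelfAdjoint (e m) := fun m => .of_nonneg (fEps_nonneg _ _)
  set c' : ℕ → B := fun m => e m * c * e m with hc'
  have hc'0 : ∀ m, 0 ≤ c' m := fun m => by
    have := star_left_conjugate_nonneg hc (e m)
    rwa [(hes m).star_eq] at this
  have hc'n : ∀ m, ‖c' m‖ ≤ ‖c‖ := fun m => by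
    have h1 := fEps_norm_le (1 / ((m : ℝ) + 1)) b
    calc ‖c' m‖ ≤ ‖e m‖ * ‖c‖ * ‖e m‖ := norm_mul₃_le
      _ ≤ 1 * ‖c‖ * 1 := by gcongr
      _ = ‖c‖ := by ring
  have hlim : Tendsto (fun m => fEps δ (c' m)) atTop (𝓝 (fEps δ c)) := by
    refine Filter.Tendsto.cfcₙ (isCompact_Icc (a := (0 : ℝ)) (b := ‖c‖)) (cutoff δ) H
      (.of_forall fun m t ht => ?_) (.of_forall fun m => .of_nonneg (hc'0 m))
      (fun t ht => qs_bound hc ht) (.of_nonneg hc) (cutoff_cont _).continuousOn (cutoff_zero _)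
    have := qs_bound (hc'0 m) ht
    exact ⟨this.1, this.2.trans (hc'n m)⟩
  refine τ.le_of_tendsto (fun m => fEps_nonneg _ _) (fEps_nonneg _ _) hlim fun m => ?_
  have hm : (0 : ℝ) < 1 / (m + 1) := by positivity
  set E := fEps (1 / (m + 1) / 2) b with hE
  have hEe : E * e m = e m := cfc_unit hb (cutoff_cont _) (cutoff_zero _) (cutoff_cont _)
    (cutoff_zero _) (fun t _ _ => by
      rcases le_total t ((1 / (m + 1)) / 2) with h | h
      · rw [cutoff_eq_zero hm h, mul_zero]
      · rw [cutoff_eq_one (by positivity) h, one_mul])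
  have hEc : E * c' m = c' m := by
    simp only [hc', ← mul_assoc, hEe]
  have := τ.pqt.unit_le (fEps_nonneg _ _) (fEps_norm_le _ _) (fEps_nonneg δ (c' m)) one_pos
    (fEps_norm_le _ _) (unit_cfc (hc'0 m) hEc (cutoff_cont _) (half_pos hδ0)
    (fun t ht => cutoff_eq_zero hδ0 ht))
  rw [ENNReal.ofReal_one, one_mul] at this
  exact this.trans (fEps_le_dTau τ hb (by positivity))

lemma norm_fEps_mul_sub {b : B} (hb : 0 ≤ b) {ε : ℝ} (hε : 0 < ε) : ‖fEps ε b * b - b‖ ≤ ε := by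
  have hs : IsSelfAdjoint b := .of_nonneg hb
  have := norm_cfc_sub_le hb (f := fun t => cutoff ε t * t) (g := fun t => t) (C := ε)
    ((cutoff_cont _).mul continuous_id)
    (by simp) (by fun_prop) rfl (fun t ht _ => by
      rcases le_total ε t with h | h
      · rw [cutoff_eq_one hε h]; simp [hε.le]
      · have h1 := cutoff_nonneg ε t
        have h2 := cutoff_le_one ε t
        rw [abs_le]; constructor <;> nlinarith)
  rwa [cfcₙ_mul (cutoff ε) (fun t => t) b (cutoff_cont _).continuousOn (cutoff_zero _), cfcₙ_id' ℝ b] at this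

lemma tendsto_fEps_mul {b : B} (hb : 0 ≤ b) :
    Tendsto (fun n : ℕ => fEps (1 / (n + 1)) b * b) atTop (𝓝 b) := by
  rw [tendsto_iff_norm_sub_tendsto_zero]
  exact squeeze_zero (fun _ => norm_nonneg _) (fun n => norm_fEps_mul_sub hb (by positivity)) tendsto_one_div

lemma tendsto_mul_fEps {b : B} (hb : 0 ≤ b) :
    Tendsto (fun n : ℕ => b * fEps (1 / (n + 1)) b) atTop (𝓝 b) := by
  have := (tendsto_fEps_mul hb).star
  simpa only [star_mul, (IsSelfAdjoint.of_nonneg hb).star_eq,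
    (IsSelfAdjoint.of_nonneg (fEps_nonneg _ b)).star_eq] using this

lemma approx_of_her {b c : B} (hb : 0 ≤ b) (hc : c ∈ her b) :
    Tendsto (fun n : ℕ => fEps (1 / (n + 1)) b * c * fEps (1 / (n + 1)) b) atTop (𝓝 c) := by
  set e : ℕ → B := fun n => fEps (1 / (n + 1)) b with he
  have hen : ∀ n, ‖e n‖ ≤ 1 := fun n => fEps_norm_le _ _
  rw [Metric.tendsto_atTop]
  intro ε hε
  obtain ⟨d, ⟨y, rfl⟩, hd⟩ := Metric.mem_closure_iff.mp hc (ε / 3) (by positivity)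
  have h1 : Tendsto (fun n => e n * (b * y * b) * e n) atTop (𝓝 (b * y * b)) := by
    have := ((tendsto_fEps_mul hb).mul_const y).mul (tendsto_mul_fEps hb)
    refine this.congr fun n => ?_
    simp only [mul_assoc, he]
  obtain ⟨N, hN⟩ := Metric.tendsto_atTop.mp h1 (ε / 3) (by positivity)
  refine ⟨N, fun n hn => ?_⟩
  have h2 : dist (e n * c * e n) (e n * (b * y * b) * e n) ≤ dist c (b * y * b) := by
    rw [dist_eq_norm, dist_eq_norm, ← sub_mul, ← mul_sub]
    calc _ ≤ ‖e n‖ * ‖c - b * y * b‖ * ‖e n‖ := norm_mul₃_le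
      _ ≤ 1 * ‖c - b * y * b‖ * 1 := by gcongr <;> exact hen n
      _ = _ := by ring
  have h3 := hN n hn
  calc dist (e n * c * e n) c ≤ dist (e n * c * e n) (e n * (b * y * b) * e n) +
      dist (e n * (b * y * b) * e n) (b * y * b) + dist (b * y * b) c := dist_triangle4 _ _ _ _
    _ < ε := by rw [dist_comm (b * y * b) c]; linarith

lemma approx_of_le {b c : B} (hb : 0 ≤ b) (hc : 0 ≤ c) {C : ℝ} (hC : 0 ≤ C) (hcb : c ≤ C • b) :
    Tendsto (fun n : ℕ => fEps (1 / (n + 1)) b * c * fEps (1 / (n + 1)) b) atTop (𝓝 c) := by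
  set e : ℕ → B := fun n => fEps (1 / (n + 1)) b with he
  have hes : ∀ m, star (e m) = e m := fun m =>
    (IsSelfAdjoint.of_nonneg (fEps_nonneg (1 / ((m : ℝ) + 1)) b)).star_eq
  set X : ℕ → B → B := fun n d => d - d * e n - e n * d + e n * d * e n with hX
  have hXs : ∀ n (s : B), X n (star s * s) = star (s - s * e n) * (s - s * e n) := by
    intro n s
    simp only [hX, star_sub, star_mul, hes, sub_mul, mul_sub, mul_assoc]; abel
  have hXpos : ∀ n d, 0 ≤ d → 0 ≤ X n d := by
    intro n d hd
    obtain ⟨s, rfl⟩ := CStarAlgebra.nonneg_iff_eq_star_mul_self.mp hd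
    rw [hXs]; exact star_mul_self_nonneg _
  have hXsub : ∀ n d d', X n (d - d') = X n d - X n d' := by
    intro n d d'; simp only [hX, sub_mul, mul_sub]; abel
  have hXsmul : ∀ n d, X n (C • d) = C • X n d := by
    intro n d; simp only [hX, smul_sub, smul_add, smul_mul_assoc, mul_smul_comm]
  have hXb : Tendsto (fun n => X n b) atTop (𝓝 0) := by
    have h1 := tendsto_mul_fEps hb
    have h2 := tendsto_fEps_mul hb
    · have h4 : Tendsto (fun n : ℕ => e n * b - e n * (b * e n)) atTop (𝓝 0) := by
        rw [tendsto_zero_iff_norm_tendsto_zero]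
        have h5 : Tendsto (fun n : ℕ => ‖b - b * e n‖) atTop (𝓝 0) := by
          have := (tendsto_const_nhds (x := b)).sub h1
          rw [sub_self] at this
          exact tendsto_zero_iff_norm_tendsto_zero.mp this
        refine squeeze_zero (fun _ => norm_nonneg _) (fun n => ?_) h5
        rw [← mul_sub]
        calc _ ≤ ‖e n‖ * ‖b - b * e n‖ := norm_mul_le _ _
          _ ≤ 1 * ‖b - b * e n‖ := by gcongr; exact fEps_norm_le _ _
          _ = _ := one_mul _
      have h6 : Tendsto (fun n : ℕ => b - b * e n) atTop (𝓝 0) := by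
        have := (tendsto_const_nhds (x := b)).sub h1
        rwa [sub_self] at this
      have := h6.sub h4
      rw [sub_zero] at this
      refine this.congr fun n => ?_
      simp only [hX, mul_assoc]; abel
  obtain ⟨s, rfl⟩ := CStarAlgebra.nonneg_iff_eq_star_mul_self.mp hc
  have hbound : ∀ n, ‖s - s * e n‖ * ‖s - s * e n‖ ≤ C * ‖X n b‖ := by
    intro n
    rw [← CStarRing.norm_star_mul_self, ← hXs]
    have : X n (star s * s) ≤ C • X n b := by
      rw [← hXsmul, ← sub_nonneg, ← hXsub]
      exact hXpos n _ (sub_nonneg.mpr hcb)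
    refine (CStarAlgebra.norm_le_norm_of_nonneg_of_le (hXpos n _ hc) this).trans ?_
    rw [norm_smul, Real.norm_of_nonneg hC]
  have hs : Tendsto (fun n => s * e n) atTop (𝓝 s) := by
    have h1 : Tendsto (fun n => ‖s - s * e n‖ * ‖s - s * e n‖) atTop (𝓝 0) := by
      refine squeeze_zero (fun _ => by positivity) hbound ?_
      have := (tendsto_zero_iff_norm_tendsto_zero.mp hXb).const_mul C
      rwa [mul_zero] at this
    have h2 : Tendsto (fun n => ‖s - s * e n‖) atTop (𝓝 0) := by
      have := (Real.continuous_sqrt.tendsto 0).comp h1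
      rw [Real.sqrt_zero] at this
      exact this.congr fun n => Real.sqrt_mul_self (norm_nonneg _)
    rw [tendsto_iff_norm_sub_tendsto_zero]
    exact h2.congr fun n => norm_sub_rev _ _
  have := hs.star.mul hs
  refine this.congr fun n => ?_
  rw [star_mul, hes]; simp only [mul_assoc, he]

lemma dTau_of_her (τ : QuasiTrace B) {b c : B} (hb : 0 ≤ b) (hc : 0 ≤ c) (h : c ∈ her b) :
    dTau τ c ≤ dTau τ b := dTau_of_approx τ hb hc (approx_of_her hb h)

lemma dTau_of_le (τ : QuasiTrace B) {b c : B} (hb : 0 ≤ b) (hc : 0 ≤ c) {C : ℝ} (hC : 0 ≤ C)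
    (h : c ≤ C • b) : dTau τ c ≤ dTau τ b := dTau_of_approx τ hb hc (approx_of_le hb hc hC h)

lemma dTau_conj (τ : QuasiTrace B) {p : B} (hp : 0 ≤ p) (g : B) :
    dTau τ (star g * p * g) ≤ dTau τ p := by
  obtain ⟨s, rfl⟩ := CStarAlgebra.nonneg_iff_eq_star_mul_self.mp hp
  have e1 : star g * (star s * s) * g = star (s * g) * (s * g) := by
    rw [star_mul]; simp only [mul_assoc]
  rw [e1, dTau_trace, dTau_trace τ s]
  refine dTau_of_le τ (mul_star_self_nonneg _) (mul_star_self_nonneg _) (norm_nonneg (g * star g)) ?_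
  rw [star_mul]
  have : s * g * (star g * star s) = s * (g * star g) * star s := by simp only [mul_assoc]
  rw [this]
  exact CStarAlgebra.star_right_conjugate_le_norm_smul (hb := .mul_star_self g)

lemma dTau_add_orth (τ : QuasiTrace B) {x y : B} (hx : 0 ≤ x) (hy : 0 ≤ y) (hxy : x * y = 0) :
    dTau τ (x + y) = dTau τ x + dTau τ y := by
  have hxs : IsSelfAdjoint x := .of_nonneg hx
  have hys : IsSelfAdjoint y := .of_nonneg hy
  have hyx : y * x = 0 := by
    have := congrArg star hxy
    rwa [star_mul, hxs.star_eq, hys.star_eq, star_zero] at this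
  unfold dTau
  rw [ENNReal.iSup_add_iSup_of_monotone]
  · refine iSup_congr fun n => ?_
    unfold fEps
    rw [cfc_orth hx hy hxy (cutoff_cont _) (cutoff_zero _)]
    refine τ.map_add_of_commute _ _ (fEps_nonneg _ _) (fEps_nonneg _ _) ?_
    have hc : Commute x y := hxy.trans hyx.symm
    have h1 : Commute (cfcₙ (cutoff (1 / (n + 1))) x) y := hc.cfcₙ_real _
    exact (h1.symm.cfcₙ_real _).symm.eq
  all_goals
    intro n m hnm
    refine τ.pqt.fEps_anti (by assumption) (by positivity) ?_
    gcongr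

end Generic3

section Generic4
set_option linter.unusedSectionVars false
set_option linter.unusedVariables false

variable {B : Type*} [NonUnitalCStarAlgebra B] [PartialOrder B] [StarOrderedRing B]

/-- ramp function from `t` to `t + h`. -/
def ramp (h t : ℝ) : ℝ → ℝ := fun s => min 1 (max 0 ((s - t) / h))

lemma ramp_cont (h t : ℝ) : Continuous (ramp h t) := by unfold ramp; fun_prop

lemma ramp_nonneg (h t s : ℝ) : 0 ≤ ramp h t s := le_min zero_le_one (le_max_left _ _)

lemma ramp_le_one (h t s : ℝ) : ramp h t s ≤ 1 := min_le_left _ _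

lemma ramp_eq_zero {h t s : ℝ} (hh : 0 < h) (hs : s ≤ t) : ramp h t s = 0 := by
  unfold ramp
  have : (s - t) / h ≤ 0 := div_nonpos_of_nonpos_of_nonneg (by linarith) hh.le
  rw [max_eq_left this, min_eq_right zero_le_one]

lemma ramp_eq_one {h t s : ℝ} (hh : 0 < h) (hs : t + h ≤ s) : ramp h t s = 1 := by
  unfold ramp
  have : 1 ≤ (s - t) / h := by rw [le_div_iff₀ hh]; linarith
  rw [max_eq_right (by linarith), min_eq_left this]

lemma cfc_cfc {x : B} (hx : 0 ≤ x) {f g : ℝ → ℝ} (hf : Continuous f) (hf0 : f 0 = 0)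
    (hg : Continuous g) (hg0 : g 0 = 0) : cfcₙ g (cfcₙ f x) = cfcₙ (fun t => g (f t)) x :=
  (cfcₙ_comp' g f x hg.continuousOn hg0 hf.continuousOn hf0 (.of_nonneg hx)).symm

lemma ramp_le (τ : QuasiTrace B) {x y : B} (hx : 0 ≤ x) (hy : 0 ≤ y) {h t : ℝ} (hh : 0 < h)
    (hxy : ‖x - y‖ ≤ h) (ht : 3 * h ≤ t) :
    τ.toFun (cfcₙ (ramp h t) x) ≤ τ.toFun (cfcₙ (ramp h (t - 3 * h)) y) := by
  have hxs : IsSelfAdjoint x := .of_nonneg hx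
  have hys : IsSelfAdjoint y := .of_nonneg hy
  set g := cut (t - h) x with hg
  have hg0 : 0 ≤ g := cut_nonneg _ _
  have hgs : IsSelfAdjoint g := .of_nonneg hg0
  set p := cut (t - 2 * h) y with hp
  have hp0 : 0 ≤ p := cut_nonneg _ _
  have hps : IsSelfAdjoint p := .of_nonneg hp0
  set k : ℝ → ℝ := fun s => max (s - (t - h)) 0 * (max (s - (t - h)) 0 * max (s - (t - h)) 0) with hk
  have hkc : Continuous k := by fun_prop
  have hm0 : max (0 - (t - h)) 0 = 0 := max_eq_right (by linarith)
  have hk0 : k 0 = 0 := by simp only [hk, hm0]; simp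
  set z := cfcₙ k x with hz
  have hz0 : 0 ≤ z := cfcₙ_nonneg fun s _ => by simp only [hk]; positivity
  have hzeq : z = g * x * g - (t - h) • (g * g) := by
    have e1 : g * g = cfcₙ (fun s : ℝ => max (s - (t - h)) 0 * max (s - (t - h)) 0) x := by
      rw [cfcₙ_mul (fun s : ℝ => max (s - (t - h)) 0) (fun s : ℝ => max (s - (t - h)) 0) x
        (by fun_prop) hm0 (by fun_prop) hm0]; rfl
    have e2 : g * x * g = cfcₙ (fun s : ℝ => max (s - (t - h)) 0 * s * max (s - (t - h)) 0) x := by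
      rw [cfcₙ_mul (fun s : ℝ => max (s - (t - h)) 0 * s) (fun s : ℝ => max (s - (t - h)) 0) x (by fun_prop) (by simp)
        (by fun_prop) hm0,
        cfcₙ_mul (fun s : ℝ => max (s - (t - h)) 0) (fun s => s) x (by fun_prop) hm0 (by fun_prop) rfl,
        cfcₙ_id' ℝ x]; rfl
    rw [e2, e1, ← cfcₙ_smul (t - h) (fun s : ℝ => max (s - (t - h)) 0 * max (s - (t - h)) 0) x
      (by fun_prop) (by simp only [hm0]; simp), ← cfcₙ_sub _ _ x (by fun_prop) (by simp)
      (by fun_prop) (by simp only [hm0]; simp), hz]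
    congr 1; ext s
    simp only [hk, smul_eq_mul]
    rcases le_total (s - (t - h)) 0 with h1 | h1
    · rw [max_eq_right h1]; ring
    · rw [max_eq_left h1]; ring
  have hgg : 0 ≤ g * g := by
    have := star_mul_self_nonneg g
    rwa [hgs.star_eq] at this
  have i1 : g * (x - y) * g ≤ h • (g * g) := by
    have := CStarAlgebra.star_left_conjugate_le_norm_smul (a := g) (hxs.sub hys)
    rw [hgs.star_eq] at this
    exact this.trans (smul_le_smul_of_nonneg_right hxy hgg)
  have i2 : g * (y - p) * g ≤ (t - 2 * h) • (g * g) := by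
    have := CStarAlgebra.star_left_conjugate_le_norm_smul (a := g) (hys.sub hps)
    rw [hgs.star_eq] at this
    refine this.trans (smul_le_smul_of_nonneg_right ?_ hgg)
    rw [norm_sub_rev]; exact norm_cut_sub hy (by linarith)
  have hzw : z ≤ g * p * g := by
    rw [hzeq]
    have h3 := add_le_add i1 i2
    rw [← add_smul, show h + (t - 2 * h) = t - h by ring] at h3
    rw [sub_le_iff_le_add]
    have : g * x * g = g * p * g + (g * (x - y) * g + g * (y - p) * g) := by
      simp only [mul_sub, sub_mul]; abel
    rw [this]
    gcongr
  have d1 : dTau τ z ≤ dTau τ p := by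
    refine (dTau_of_le τ (b := g * p * g) (C := 1) ?_ hz0 zero_le_one (by rwa [one_smul])).trans ?_
    · have := star_left_conjugate_nonneg hp0 g
      rwa [hgs.star_eq] at this
    · have := dTau_conj τ hp0 g
      rwa [hgs.star_eq] at this
  have d0 : τ.toFun (cfcₙ (ramp h t) x) ≤ dTau τ z := by
    refine le_trans ?_ (fEps_le_dTau τ hz0 (ε := h * (h * h)) (by positivity))
    unfold fEps
    rw [hz, cfc_cfc hx hkc hk0 (cutoff_cont _) (cutoff_zero _)]
    refine τ.pqt.mono_cfc hx (ramp_cont _ _) (ramp_eq_zero hh (by linarith))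
      ((cutoff_cont _).comp hkc) (by simp [hk0, cutoff_zero]) (fun s _ _ => ramp_nonneg _ _ _) ?_
    intro s hs _
    rcases le_total s t with h1 | h1
    · rw [ramp_eq_zero hh h1]; exact cutoff_nonneg _ _
    · rw [cutoff_eq_one (by positivity)]
      · exact ramp_le_one _ _ _
      · have : h ≤ max (s - (t - h)) 0 := le_max_of_le_left (by linarith)
        simp only [hk]; gcongr
  have d2 : dTau τ p ≤ τ.toFun (cfcₙ (ramp h (t - 3 * h)) y) := by
    refine iSup_le fun n => ?_
    unfold fEps
    have hm1 : max (0 - (t - 2 * h)) 0 = 0 := max_eq_right (by linarith)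
    rw [hp]; unfold cut
    rw [cfc_cfc hy (f := fun t_1 => max (t_1 - (t - 2 * h)) 0) (by fun_prop) hm1 (cutoff_cont _) (cutoff_zero _)]
    refine τ.pqt.mono_cfc hy ((cutoff_cont _).comp (by fun_prop)) (by rw [hm1, cutoff_zero])
      (ramp_cont _ _) (ramp_eq_zero hh (by linarith)) (fun s _ _ => cutoff_nonneg _ _) ?_
    intro s hs _
    rcases le_total s (t - 2 * h) with h1 | h1
    · rw [max_eq_right (by linarith), cutoff_zero]; exact ramp_nonneg _ _ _
    · rw [ramp_eq_one hh (by linarith)]; exact cutoff_le_one _ _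
  exact d0.trans (d1.trans d2)

lemma cut_step (τ : QuasiTrace B) {x : B} (hx : 0 ≤ x) {h ε : ℝ} (hh : 0 < h) (hε : 0 ≤ ε) :
    τ.toFun (cut ε x) =
      ENNReal.ofReal h * τ.toFun (cfcₙ (ramp h ε) x) + τ.toFun (cut (ε + h) x) := by
  have hxs : IsSelfAdjoint x := .of_nonneg hx
  have e1 : cut ε x = cfcₙ (fun s => h * ramp h ε s + max (s - (ε + h)) 0) x := by
    unfold cut
    congr 1; ext s
    rcases le_total s ε with h1 | h1
    · rw [ramp_eq_zero hh h1, max_eq_right (by linarith), max_eq_right (by linarith)]; simp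
    · rcases le_total s (ε + h) with h2 | h2
      · rw [max_eq_left (by linarith), max_eq_right (by linarith)]
        unfold ramp
        rw [max_eq_right (div_nonneg (by linarith) hh.le), min_eq_right]
        · field_simp; ring
        · rw [div_le_one hh]; linarith
      · rw [max_eq_left (by linarith), max_eq_left (by linarith), ramp_eq_one hh h2]; ring
  rw [e1, τ.pqt.add_cfc hx (f := fun s => h * ramp h ε s) (g := fun s => max (s - (ε + h)) 0)
    (continuous_const.mul (ramp_cont _ _)) (by rw [ramp_eq_zero hh hε, mul_zero]) (by fun_prop)
    (max_eq_right (by linarith)) (fun s _ => mul_nonneg hh.le (ramp_nonneg _ _ _))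
    (fun s _ => le_max_right _ _)]
  congr 1
  rw [← τ.map_smul h _ hh (cfcₙ_nonneg fun s _ => ramp_nonneg _ _ _),
    ← cfcₙ_smul h (ramp h ε) x (ramp_cont _ _).continuousOn (ramp_eq_zero hh hε)]
  simp

lemma cut_le_cut (τ : QuasiTrace B) {x y : B} (hx : 0 ≤ x) (hy : 0 ≤ y) {h ε : ℝ} (hh : 0 < h)
    (hxy : ‖x - y‖ ≤ h) (hε : 3 * h ≤ ε) :
    τ.toFun (cut ε x) ≤ τ.toFun (cut (ε - 3 * h) y) := by
  have key : ∀ (N : ℕ) (ε : ℝ), 3 * h ≤ ε → ‖x‖ ≤ ε + N * h →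
      τ.toFun (cut ε x) ≤ τ.toFun (cut (ε - 3 * h) y) := by
    intro N
    induction N with
    | zero =>
      intro ε hε hN
      have : cut ε x = 0 := by
        unfold cut
        rw [← cfcₙ_const_zero ℝ x]
        refine cfcₙ_congr fun s hs => max_eq_right ?_
        have := (qs_bound hx hs).2
        simp at hN; linarith
      rw [this, τ.map_zero]; exact zero_le
    | succ N ih =>
      intro ε hε hN
      rw [cut_step τ hx hh (by linarith), cut_step τ hy hh (by linarith)]
      refine add_le_add (mul_le_mul_right (ramp_le τ hx hy hh hxy hε) _) ?_
      have := ih (ε + h) (by linarith) (by push_cast at hN; linarith)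
      rwa [show ε + h - 3 * h = ε - 3 * h + h by ring] at this
  obtain ⟨N, hN⟩ := exists_nat_ge (‖x‖ / h)
  refine key N ε hε ?_
  rw [div_le_iff₀ hh] at hN; linarith

lemma mem_pedersen_of_unit {f g : B} (h : g * f = f) : f ∈ pedersen B := by
  unfold pedersen pedersenIn
  simp only [Set.mem_iInter, Set.mem_ofPred_eq]
  rintro I ⟨⟨-, h0, hadd, hneg, hmul⟩, hd⟩
  obtain ⟨y, hy, hgy⟩ := Metric.mem_closure_iff.mp (hd (Set.mem_univ g)) 1 one_pos
  rw [dist_eq_norm] at hgy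
  have hu : ‖((g - y : B) : Unitization ℂ B)‖ < 1 := by rwa [Unitization.norm_inr]
  set k := (Units.oneSub _ hu)⁻¹ with hk
  have hk1 : (k : Unitization ℂ B) * (1 - ((g - y : B) : Unitization ℂ B)) = 1 := by
    rw [hk, ← Units.val_oneSub _ hu]; exact Units.inv_mul _
  have e1 : (1 - ((g - y : B) : Unitization ℂ B)) * (f : Unitization ℂ B) = ((y * f : B) : Unitization ℂ B) := by
    rw [sub_mul, one_mul, ← Unitization.inr_mul, sub_mul, h]
    rw [← Unitization.inr_sub]; congr 1; abel
  have e2 : (f : Unitization ℂ B) = (k : Unitization ℂ B) * ((y * f : B) : Unitization ℂ B) := by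
    rw [← e1, ← mul_assoc, hk1, one_mul]
  have e3 := congrArg (fun q : Unitization ℂ B => q.snd) e2
  simp only [Unitization.snd_inr, Unitization.snd_mul, Unitization.fst_inr] at e3
  rw [e3]
  have hm : y * f ∈ I := (hmul y hy f (Set.mem_univ _)).1
  simp only [zero_smul, add_zero]
  refine hadd _ ?_ _ ((hmul _ hm _ (Set.mem_univ _)).2)
  rw [← mul_smul_comm]
  exact (hmul y hy _ (Set.mem_univ _)).1

lemma cfc_mem_pedersen {x : B} (hx : 0 ≤ x) {f : ℝ → ℝ} (hf : Continuous f) {ε : ℝ} (hε : 0 < ε)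
    (hf0 : ∀ t ≤ ε, f t = 0) : cfcₙ f x ∈ pedersen B := by
  refine mem_pedersen_of_unit (g := fEps ε x) (cfc_unit hx (cutoff_cont _) (cutoff_zero _) hf
    (hf0 0 hε.le) fun t _ _ => ?_)
  rcases le_total t ε with h | h
  · rw [hf0 t h, mul_zero]
  · rw [cutoff_eq_one hε h, one_mul]

lemma fEps_mem_pedersen {x : B} (hx : 0 ≤ x) {ε : ℝ} (hε : 0 < ε) : fEps ε x ∈ pedersen B :=
  cfc_mem_pedersen hx (cutoff_cont _) (half_pos hε) (fun _ ht => cutoff_eq_zero hε ht)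

lemma cut_mem_pedersen {x : B} (hx : 0 ≤ x) {ε : ℝ} (hε : 0 < ε) : cut ε x ∈ pedersen B :=
  cfc_mem_pedersen hx (by fun_prop) hε (fun _ ht => max_eq_right (by linarith))

end Generic4

section Stab5
set_option linter.unusedSectionVars false
set_option linter.unusedVariables false

variable {A W : Type*} [NonUnitalCStarAlgebra A] [PartialOrder A] [StarOrderedRing A]
  [NonUnitalCStarAlgebra W] [PartialOrder W] [StarOrderedRing W]

/-- The diagonal embedding as a star homomorphism. -/
def Stabilization.hom (SB : Stabilization A W) (i : ℕ) : A →⋆ₙₐ[ℂ] W where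
  toFun := SB.emb i i
  map_smul' c x := by simp
  map_zero' := by simp
  map_add' x y := by simp
  map_mul' x y := by rw [SB.emb_mul, if_pos rfl]
  map_star' x := by rw [SB.emb_star]

lemma Stabilization.hom_apply (SB : Stabilization A W) (i : ℕ) (a : A) :
    SB.hom i a = SB.emb i i a := rfl

lemma Stabilization.emb_cfc (SB : Stabilization A W) (i : ℕ) {a : A} (ha : IsSelfAdjoint a) {f : ℝ → ℝ}
    (hf : Continuous f) (hf0 : f 0 = 0) : SB.emb i i (cfcₙ f a) = cfcₙ f (SB.emb i i a) := by
  have h1 : Continuous (SB.hom i) :=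
    (AddMonoidHomClass.isometry_of_norm (SB.hom i) (SB.norm_emb i i)).continuous
  exact (SB.hom i).map_cfcₙ f a hf.continuousOn hf0 h1 ha (ha.map (SB.hom i))

lemma Stabilization.emb_nonneg (SB : Stabilization A W) (i : ℕ) {a : A} (ha : 0 ≤ a) :
    0 ≤ SB.emb i i a := by
  obtain ⟨s, rfl⟩ := CStarAlgebra.nonneg_iff_eq_star_mul_self.mp ha
  have := star_mul_self_nonneg (SB.emb i i s)
  rwa [SB.emb_star, SB.emb_mul, if_pos rfl] at this

lemma QuasiTrace.eval_cont {B : Type*} [NonUnitalCStarAlgebra B] [PartialOrder B] [StarOrderedRing B]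
    {x : B} (hx : x ∈ pedersen B) :
    Continuous (fun τ : QuasiTrace B => τ.toFun x) := by
  have h1 : Continuous (fun τ : QuasiTrace B => fun a : pedersen B => τ.toFun a) :=
    continuous_induced_dom
  exact (continuous_apply (⟨x, hx⟩ : pedersen B)).comp h1

lemma dTau_bound_closure {S : Set (QuasiTrace W)} {x : W} (hx : 0 ≤ x) {C : ℝ≥0∞}
    (h : ∀ τ ∈ S, dTau τ x ≤ C) : ∀ τ ∈ closure S, dTau τ x ≤ C := by
  intro τ hτ
  refine iSup_le fun n => ?_
  have hcl : IsClosed {τ : QuasiTrace W | τ.toFun (fEps (1 / (n + 1)) x) ≤ C} :=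
    isClosed_le (QuasiTrace.eval_cont (fEps_mem_pedersen hx (by positivity))) continuous_const
  exact closure_minimal (fun σ hσ => (fEps_le_dTau σ hx (by positivity)).trans (h σ hσ)) hcl hτ

lemma dTau_emb00_le (SB : Stabilization A W) {d : A} (hd : 0 ≤ d) :
    ∀ τ ∈ QTSet SB, dTau τ (SB.emb 0 0 d) ≤ 1 := by
  intro τ hτ
  refine iSup_le fun n => ?_
  unfold fEps
  rw [← SB.emb_cfc 0 (.of_nonneg hd) (cutoff_cont _) (cutoff_zero _), ← show _ = _ from hτ]
  exact le_iSup (fun a : {a : A // 0 ≤ a ∧ ‖a‖ ≤ 1} => τ.toFun (SB.emb 0 0 a))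
    ⟨_, fEps_nonneg _ d, fEps_norm_le _ d⟩

lemma dTau_emb_eq (SB : Stabilization A W) (i : ℕ) {d : A} (hd : 0 ≤ d) (τ : QuasiTrace W) :
    dTau τ (SB.emb i i d) = dTau τ (SB.emb 0 0 d) := by
  obtain ⟨s, rfl⟩ := CStarAlgebra.nonneg_iff_eq_star_mul_self.mp hd
  have h1 := dTau_trace τ (SB.emb i i s)
  have h2 := dTau_trace τ (SB.emb i 0 s)
  simp only [SB.emb_star, SB.emb_mul, if_true] at h1 h2
  rw [h1, h2]

lemma exists_quarter {c : A} (hc : 0 ≤ c) : ∃ r s : A, 0 ≤ s ∧ c = r * s * r := by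
  refine ⟨CFC.sqrt (CFC.sqrt c), CFC.sqrt c, CFC.sqrt_nonneg _, ?_⟩
  set s := CFC.sqrt c with hs
  have h1 : CFC.sqrt s * CFC.sqrt s = s := CFC.sqrt_mul_sqrt_self s (CFC.sqrt_nonneg _)
  have h2 : s * s = c := CFC.sqrt_mul_sqrt_self c hc
  set r := CFC.sqrt s
  rw [← h2, ← h1]; simp only [mul_assoc]

lemma pedersen_rep (SB : Stabilization A W) {x : W} (hx : x ∈ pedersen W) :
    ∃ (n : ℕ) (y z : Fin n → W) (c : Fin n → A), (∀ i, 0 ≤ c i) ∧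
      x = ∑ i, y i * SB.emb 0 0 (c i) * z i := by
  set S : Set W := {w | ∃ (y z : W) (c : A), 0 ≤ c ∧ w = y * SB.emb 0 0 c * z} with hS
  set J : Submodule ℂ W := Submodule.span ℂ S with hJ
  have hideal : IsIdealIn W Set.univ (J : Set W) := by
    refine ⟨Set.subset_univ _, J.zero_mem, fun x hx y hy => J.add_mem hx hy,
      fun x hx => J.neg_mem hx, fun x hx b _ => ⟨?_, ?_⟩⟩
    · refine Submodule.span_induction (p := fun x _ => x * b ∈ J) ?_ (by simp) ?_ ?_ hx
      · rintro _ ⟨y, z, c, hc, rfl⟩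
        exact Submodule.subset_span ⟨y, z * b, c, hc, by simp only [mul_assoc]⟩
      · intro x y _ _ h1 h2; rw [add_mul]; exact J.add_mem h1 h2
      · intro r x _ h1; rw [smul_mul_assoc]; exact J.smul_mem _ h1
    · refine Submodule.span_induction (p := fun x _ => b * x ∈ J) ?_ (by simp) ?_ ?_ hx
      · rintro _ ⟨y, z, c, hc, rfl⟩
        exact Submodule.subset_span ⟨b * y, z, c, hc, by simp only [mul_assoc]⟩
      · intro x y _ _ h1 h2; rw [mul_add]; exact J.add_mem h1 h2
      · intro r x _ h1; rw [mul_smul_comm]; exact J.smul_mem _ h1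
  have hdense : (Set.univ : Set W) ⊆ closure (J : Set W) := by
    have h1 : Submodule.span ℂ {w : W | ∃ (i j : ℕ) (a : A), w = SB.emb i j a} ≤ J := by
      rw [Submodule.span_le]
      rintro _ ⟨i, j, a, rfl⟩
      have ha : a ∈ Submodule.span ℂ {a : A | 0 ≤ a} := by
        rw [CStarAlgebra.span_nonneg]; trivial
      refine Submodule.span_induction (p := fun a _ => SB.emb i j a ∈ J) ?_ (by simp) ?_ ?_ ha
      · intro a ha
        obtain ⟨r, s, hs, rfl⟩ := exists_quarter ha
        refine Submodule.subset_span ⟨SB.emb i 0 r, SB.emb 0 j r, s, hs, ?_⟩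
        simp [SB.emb_mul]
      · intro x y _ _ h1 h2; rw [map_add]; exact J.add_mem h1 h2
      · intro r x _ h1; rw [map_smul]; exact J.smul_mem _ h1
    intro w _
    exact closure_mono h1 (SB.dense_span w)
  have hxJ : x ∈ J := by
    have := hx
    unfold pedersen pedersenIn at this
    simp only [Set.mem_iInter, Set.mem_ofPred_eq] at this
    exact this J ⟨hideal, hdense⟩
  obtain ⟨n, f, g, hfg⟩ := Submodule.mem_span_set'.mp hxJ
  choose y z c hc hg using fun i => (g i).2
  refine ⟨n, fun i => f i • y i, z, c, hc, ?_⟩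
  rw [← hfg]
  refine Finset.sum_congr rfl fun i _ => ?_
  rw [hg i, smul_mul_assoc, smul_mul_assoc]

lemma dTau_sum_emb_le (SB : Stabilization A W) {τ : QuasiTrace W} {C : ℝ≥0∞}
    (hτ : ∀ d : A, 0 ≤ d → dTau τ (SB.emb 0 0 d) ≤ C) (s : ℕ → A)
    (hs : ∀ i, 0 ≤ s i) (n : ℕ) :
    dTau τ (∑ i ∈ Finset.range n, SB.emb i i (s i)) ≤ n * C := by
  induction n with
  | zero =>
    simp only [Finset.range_zero, Finset.sum_empty]
    refine iSup_le fun n => ?_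
    simp [fEps, τ.map_zero]
  | succ n ih =>
    rw [Finset.sum_range_succ, dTau_add_orth τ
      (Finset.sum_nonneg fun i _ => SB.emb_nonneg i (hs i)) (SB.emb_nonneg n (hs n))]
    · push_cast; rw [add_mul, one_mul]
      refine add_le_add ih ?_
      rw [dTau_emb_eq SB n (hs n)]; exact hτ _ (hs n)
    · rw [Finset.sum_mul]
      refine Finset.sum_eq_zero fun i hi => ?_
      rw [SB.emb_mul, if_neg (Finset.mem_range.mp hi).ne]

lemma dTau_sq (τ : QuasiTrace W) {x : W} (hx : 0 ≤ x) : dTau τ x ≤ dTau τ (x * x) := by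
  have hxs : IsSelfAdjoint x := .of_nonneg hx
  have hxx : 0 ≤ x * x := by
    have := star_mul_self_nonneg x
    rwa [hxs.star_eq] at this
  refine iSup_le fun n => ?_
  set ε : ℝ := 1 / (n + 1) with hε
  have hε0 : 0 < ε := by positivity
  refine le_trans ?_ (fEps_le_dTau τ hxx (ε := ε * ε / 4) (by positivity))
  have e1 : x * x = cfcₙ (fun t : ℝ => t * t) x := by
    rw [cfcₙ_mul (fun t : ℝ => t) (fun t => t) x, cfcₙ_id' ℝ x]
  unfold fEps
  rw [e1, cfc_cfc hx (f := fun t : ℝ => t * t) (by fun_prop) (by simp) (cutoff_cont _) (cutoff_zero _)]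
  refine τ.pqt.mono_cfc hx (cutoff_cont _) (cutoff_zero _) ((cutoff_cont _).comp (by fun_prop))
    (by simp [cutoff_zero]) (fun t _ _ => cutoff_nonneg _ _) fun t ht _ => ?_
  rcases le_total t (ε / 2) with h | h
  · rw [cutoff_eq_zero hε0 h]; exact cutoff_nonneg _ _
  · rw [cutoff_eq_one (ε := ε * ε / 4) (by positivity) (by nlinarith)]; exact cutoff_le_one _ _

lemma dTau_pedersen_le (SB : Stabilization A W) {x : W} (hx : x ∈ pedersen W) (hx0 : 0 ≤ x) :
    ∃ n : ℕ, ∀ τ ∈ closure (QTSet SB), dTau τ x ≤ n := by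
  obtain ⟨n, y, z, c, hc, rfl⟩ := pedersen_rep SB hx
  choose r s hs hrs using fun i => exists_quarter (hc i)
  set x := ∑ i, y i * SB.emb 0 0 (c i) * z i with hxdef
  refine ⟨n, dTau_bound_closure hx0 fun τ hτ => ?_⟩
  have hxs : IsSelfAdjoint x := .of_nonneg hx0
  set s' : ℕ → A := fun i => if h : i < n then s ⟨i, h⟩ else 0 with hs'
  have hs'0 : ∀ i, 0 ≤ s' i := by
    intro i; simp only [hs']; split_ifs
    · exact hs _
    · exact le_rfl
  set E := ∑ i ∈ Finset.range n, SB.emb i i (s' i) with hE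
  have hE' : E = ∑ i : Fin n, SB.emb i i (s i) := by
    rw [hE, Finset.sum_range]
    refine Finset.sum_congr rfl fun i _ => ?_
    simp [hs']
  have hE0 : 0 ≤ E := Finset.sum_nonneg fun i _ => SB.emb_nonneg i (hs'0 i)
  have hEs : IsSelfAdjoint E := .of_nonneg hE0
  set Y : W := ∑ i : Fin n, y i * SB.emb 0 i (r i) with hY
  set Z : W := ∑ i : Fin n, SB.emb i 0 (r i) * z i with hZ
  have hEZ : E * Z = ∑ i : Fin n, SB.emb i 0 (s i * r i) * z i := by
    rw [hE', hZ, Finset.sum_mul_sum]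
    refine Finset.sum_congr rfl fun i _ => ?_
    rw [Finset.sum_eq_single i]
    · rw [← mul_assoc, SB.emb_mul, if_pos rfl]
    · intro j _ hj
      rw [← mul_assoc, SB.emb_mul, if_neg, zero_mul]
      exact fun h => hj (Fin.ext h.symm)
    · simp
  have hYEZ : x = Y * (E * Z) := by
    rw [hEZ, hY, hxdef, Finset.sum_mul_sum]
    refine Finset.sum_congr rfl fun i _ => ?_
    have hre : ∀ j : Fin n, y i * SB.emb 0 i (r i) * (SB.emb j 0 (s j * r j) * z j) =
        y i * (SB.emb 0 i (r i) * SB.emb j 0 (s j * r j)) * z j := by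
      intro j; simp only [mul_assoc]
    rw [Finset.sum_eq_single i]
    · rw [hre, SB.emb_mul, if_pos rfl, hrs i, mul_assoc (r i)]
    · intro j _ hj
      rw [hre, SB.emb_mul, if_neg, mul_zero, zero_mul]
      exact fun h => hj (Fin.ext h.symm)
    · simp
  set k := E * Z with hk
  have hxx : x * x = star k * (star Y * Y) * k := by
    nth_rewrite 1 [← hxs.star_eq]
    rw [hYEZ, star_mul]; simp only [mul_assoc]
  calc dTau τ x ≤ dTau τ (x * x) := dTau_sq τ hx0
    _ ≤ dTau τ (star k * k) := by
      rw [hxx]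
      refine dTau_of_le τ (star_mul_self_nonneg _)
        (star_left_conjugate_nonneg (star_mul_self_nonneg _) _) (norm_nonneg (star Y * Y)) ?_
      exact CStarAlgebra.star_left_conjugate_le_norm_smul (hb := .star_mul_self Y)
    _ = dTau τ (k * star k) := dTau_trace τ k
    _ ≤ dTau τ E := by
      refine dTau_of_her τ hE0 (mul_star_self_nonneg _) (subset_closure ⟨Z * star Z, ?_⟩)
      rw [hk, star_mul, hEs.star_eq]; simp only [mul_assoc]
    _ ≤ n * 1 := dTau_sum_emb_le SB (fun d hd => dTau_emb00_le SB hd τ hτ) s' hs'0 n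
    _ = n := mul_one _

end Stab5

section Compact6
set_option linter.unusedSectionVars false
set_option linter.unusedVariables false

/-- The limit of a function to the extended nonnegative reals along an ultrafilter. -/
def limU {ι : Type*} (F : Ultrafilter ι) (u : ι → ℝ≥0∞) : ℝ≥0∞ := (F.map u).lim

lemma tendsto_limU {ι : Type*} (F : Ultrafilter ι) (u : ι → ℝ≥0∞) :
    Tendsto u F (𝓝 (limU F u)) := (F.map u).le_nhds_lim

lemma limU_eq {ι : Type*} (F : Ultrafilter ι) {u : ι → ℝ≥0∞} {c : ℝ≥0∞}
    (h : Tendsto u F (𝓝 c)) : limU F u = c :=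
  tendsto_nhds_unique (tendsto_limU F u) h

lemma limU_mono {ι : Type*} (F : Ultrafilter ι) {u v : ι → ℝ≥0∞}
    (h : ∀ᶠ i in (F : Filter ι), u i ≤ v i) : limU F u ≤ limU F v :=
  le_of_tendsto_of_tendsto (tendsto_limU F u) (tendsto_limU F v) h

lemma PQT.lim {B : Type*} [NonUnitalCStarAlgebra B] [PartialOrder B] [StarOrderedRing B]
    {ι : Type*} (F : Ultrafilter ι) {φ : ι → B → ℝ≥0∞} (h : ∀ i, PQT (φ i)) :
    PQT (fun x => limU F (fun i => φ i x)) where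
  zero := limU_eq F (by simp only [(h _).zero]; exact tendsto_const_nhds)
  smul r a hr ha := limU_eq F (by
    simp only [(h _).smul r a hr ha]
    exact ENNReal.Tendsto.const_mul (tendsto_limU F _) (Or.inr ENNReal.ofReal_ne_top))
  add a b ha hb hab := limU_eq F (by
    simp only [(h _).add a b ha hb hab]
    exact (tendsto_limU F _).add (tendsto_limU F _))
  tr x := by simp only [(h _).tr]

variable {A W : Type*} [NonUnitalCStarAlgebra A] [PartialOrder A] [StarOrderedRing A]
  [NonUnitalCStarAlgebra W] [PartialOrder W] [StarOrderedRing W]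

/-- Embedding in the upper left corner, as a function. -/
def cornerFun (a : W) : CStarMatrix (Fin 2) (Fin 2) W := fun i j => if i = 0 ∧ j = 0 then a else 0

lemma cornerFun_apply (a : W) (i j : Fin 2) :
    cornerFun a i j = if i = 0 ∧ j = 0 then a else 0 := rfl

/-- Embedding in the upper left corner. -/
def corner : W →⋆ₙₐ[ℂ] CStarMatrix (Fin 2) (Fin 2) W where
  toFun := cornerFun
  map_smul' c x := by
    ext i j; fin_cases i <;> fin_cases j <;> simp [cornerFun_apply]
  map_zero' := by ext i j; simp [cornerFun_apply]
  map_add' x y := by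
    ext i j; fin_cases i <;> fin_cases j <;> simp [cornerFun_apply]
  map_mul' x y := by
    ext i j; fin_cases i <;> fin_cases j <;> simp [CStarMatrix.mul_apply, cornerFun_apply]
  map_star' x := by
    ext i j; fin_cases i <;> fin_cases j <;> simp [CStarMatrix.star_apply, cornerFun_apply]

lemma nn_iff {B : Type*} [NonUnitalCStarAlgebra B] [PartialOrder B] [StarOrderedRing B] {x : B} :
    0 ≤ x ↔ ∃ s, x = star s * s := CStarAlgebra.nonneg_iff_eq_star_mul_self

lemma corner_nonneg {a : W} : 0 ≤ corner a ↔ 0 ≤ a := by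
  constructor
  · intro h
    obtain ⟨s, hs⟩ := nn_iff.mp h
    have h2 : corner a 0 0 = a := by
      change cornerFun a 0 0 = a
      simp [cornerFun_apply]
    rw [← h2, hs, CStarMatrix.mul_apply]
    refine Finset.sum_nonneg fun k _ => ?_
    rw [CStarMatrix.star_apply]
    exact star_mul_self_nonneg _
  · intro h
    obtain ⟨s, rfl⟩ := nn_iff.mp h
    rw [map_mul, map_star]
    exact star_mul_self_nonneg _

lemma hom_cut {B M : Type*} [NonUnitalCStarAlgebra B] [PartialOrder B] [StarOrderedRing B]
    [NonUnitalCStarAlgebra M] [PartialOrder M] [StarOrderedRing M] (D : B →⋆ₙₐ[ℂ] M)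
    {a : B} (ha : 0 ≤ a) {ε : ℝ} (hε : 0 < ε) :
    D (cut ε a) = cut ε (D a) := by
  have hs : IsSelfAdjoint a := .of_nonneg ha
  exact D.map_cfcₙ (fun t => max (t - ε) 0) a (by fun_prop) (by simpa using hε.le)
    (map_continuous _) hs (hs.map _)

lemma corner_cut {a : W} (ha : 0 ≤ a) {ε : ℝ} (hε : 0 < ε) :
    corner (cut ε a) = cut ε (corner a) := hom_cut corner ha hε

/-- A matrix extension of a quasitrace. -/
def matExt (τ : QuasiTrace W) : CStarMatrix (Fin 2) (Fin 2) W → ℝ≥0∞ :=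
  Classical.choose τ.exists_matrix_extension

lemma matExt_corner (τ : QuasiTrace W) (a : W) : matExt τ (corner a) = τ.toFun a :=
  (Classical.choose_spec τ.exists_matrix_extension).1 a

lemma matExt_pqt (τ : QuasiTrace W) : PQT (matExt τ) where
  zero := (Classical.choose_spec τ.exists_matrix_extension).2.1
  smul r x hr hx := (Classical.choose_spec τ.exists_matrix_extension).2.2.1 r x hr
    (nn_iff.mp hx)
  add x y hx hy hxy := (Classical.choose_spec τ.exists_matrix_extension).2.2.2.1 x y
    (nn_iff.mp hx)
    (nn_iff.mp hy) hxy
  tr x := (Classical.choose_spec τ.exists_matrix_extension).2.2.2.2 x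

lemma le_norm_mul (SB : Stabilization A W) {x : W} (hx : x ∈ pedersen W) (hx0 : 0 ≤ x) :
    ∃ n : ℕ, ∀ τ ∈ closure (QTSet SB), dTau τ x ≤ n ∧
      ∀ ε : ℝ, 0 < ε → τ.toFun x ≤ τ.toFun (cut ε x) + ENNReal.ofReal ε * n := by
  obtain ⟨n, hn⟩ := dTau_pedersen_le SB hx hx0
  refine ⟨n, fun τ hτ => ⟨hn τ hτ, fun ε hε => ?_⟩⟩
  have hs : IsSelfAdjoint x := .of_nonneg hx0
  have e : x = cfcₙ (fun t : ℝ => max (t - ε) 0 + min t ε) x := by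
    conv_lhs => rw [← cfcₙ_id' ℝ x]
    congr 1; ext t
    rcases le_total t ε with h | h
    · rw [max_eq_right (by linarith), min_eq_left h, zero_add]
    · rw [max_eq_left (by linarith), min_eq_right h]; ring
  conv_lhs => rw [e]
  rw [τ.pqt.add_cfc hx0 (f := fun t => max (t - ε) 0) (g := fun t => min t ε) (by fun_prop)
    (by simpa using hε.le) (by fun_prop) (by simpa using hε.le) (fun _ _ => le_max_right _ _)
    (fun t ht => le_min ht hε.le)]
  refine add_le_add le_rfl ?_
  refine (cfc_le_dTau τ hx0 (f := fun t => min t ε) (by fun_prop) hε (by simpa using hε.le)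
    (fun t ht _ => le_min ht hε.le) (fun t _ _ => min_le_right _ _)).trans ?_
  gcongr
  exact hn τ hτ

/-- The regularized limit quasitrace. -/
def limQT (SB : Stabilization A W) (F : Ultrafilter (QuasiTrace W))
    (hF : ∀ᶠ τ in (F : Filter (QuasiTrace W)), τ ∈ closure (QTSet SB)) : QuasiTrace W where
  toFun := reg (fun x => limU F (fun τ => τ.toFun x))
  zero_of_not_nonneg a ha := by simp [reg, ha]
  map_zero := (PQT.lim F fun τ : QuasiTrace W => τ.pqt).reg.zero
  map_smul := (PQT.lim F fun τ : QuasiTrace W => τ.pqt).reg.smul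
  map_add_of_commute := (PQT.lim F fun τ : QuasiTrace W => τ.pqt).reg.add
  map_star_mul_self := (PQT.lim F fun τ : QuasiTrace W => τ.pqt).reg.tr
  lowerSemicontinuousOn := by
    intro x hx C hC
    have hx' : 0 ≤ x := hx
    rw [reg_eq hx'] at hC
    simp only [lt_iSup_iff] at hC
    obtain ⟨ε, hε, hC⟩ := hC
    have h1 : ∀ᶠ y in 𝓝[{a : W | 0 ≤ a}] x, ‖x - y‖ ≤ ε / 6 := by
      refine mem_nhdsWithin_of_mem_nhds ?_
      filter_upwards [Metric.ball_mem_nhds x (show 0 < ε / 6 by positivity)] with y hy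
      rw [← dist_eq_norm, dist_comm]; exact (Metric.mem_ball.mp hy).le
    filter_upwards [h1, self_mem_nhdsWithin] with y hy hy0
    have hy0' : 0 ≤ y := hy0
    rw [reg_eq hy0']
    refine lt_of_lt_of_le hC (le_iSup₂_of_le (ε - 3 * (ε / 6)) (by linarith) ?_)
    exact limU_mono F (Eventually.of_forall fun τ =>
      cut_le_cut τ hx' hy0' (by positivity) hy (by linarith))
  finite_on_pedersen a ha ha0 := by
    obtain ⟨n, hn⟩ := le_norm_mul SB ha ha0
    refine lt_of_le_of_lt (b := ENNReal.ofReal (‖a‖ + 1) * n) ?_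
      (ENNReal.mul_lt_top ENNReal.ofReal_lt_top (ENNReal.natCast_lt_top n))
    rw [reg_eq ha0]
    refine iSup₂_le fun ε hε => ?_
    refine le_of_tendsto (tendsto_limU F _) ?_
    filter_upwards [hF] with τ hτ
    refine (cfc_le_dTau τ ha0 (f := fun t => max (t - ε) 0) (by fun_prop) (C := ‖a‖ + 1)
      (by positivity) (by simpa using hε.le)
      (fun t ht _ => le_max_right _ _)
      (fun t _ ht => max_le (by linarith) (by positivity))).trans ?_
    gcongr
    exact (hn τ hτ).1
  exists_matrix_extension := by
    have hp := (PQT.lim F fun τ : QuasiTrace W => matExt_pqt τ).reg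
    refine ⟨reg (B := CStarMatrix (Fin 2) (Fin 2) W) (fun x => limU F (fun τ => matExt τ x)), ?_, hp.zero, ?_, ?_, hp.tr⟩
    · intro a
      change reg (fun x => limU F (fun τ => matExt τ x)) (corner a) = _
      by_cases ha : 0 ≤ a
      · rw [reg_eq ha, reg_eq (corner_nonneg.mpr ha)]
        refine iSup_congr fun ε => iSup_congr fun hε => ?_
        rw [← corner_cut ha hε]
        simp only [matExt_corner]
      · have h2 : ¬ 0 ≤ corner a := fun h => ha (corner_nonneg.mp h)
        simp [reg, ha, h2]
    · intro r x hr hx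
      exact hp.smul r x hr ((nn_iff (B := CStarMatrix (Fin 2) (Fin 2) W)).mpr hx)
    · intro x y hx hy hxy
      exact hp.add x y ((nn_iff (B := CStarMatrix (Fin 2) (Fin 2) W)).mpr hx)
        ((nn_iff (B := CStarMatrix (Fin 2) (Fin 2) W)).mpr hy) hxy

lemma isCompact_closure (SB : Stabilization A W) : IsCompact (closure (QTSet SB)) := by
  rw [isCompact_iff_ultrafilter_le_nhds]
  intro F hF
  have hF' : ∀ᶠ τ in (F : Filter (QuasiTrace W)), τ ∈ closure (QTSet SB) := by
    simpa using hF
  have hlim : (F : Filter (QuasiTrace W)) ≤ 𝓝 (limQT SB F hF') := by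
    rw [nhds_induced, ← tendsto_iff_comap, tendsto_pi_nhds]
    rintro ⟨a, ha⟩
    change Tendsto (fun τ : QuasiTrace W => τ.toFun a) F
      (𝓝 (reg (fun x => limU F (fun τ => τ.toFun x)) a))
    by_cases ha0 : 0 ≤ a
    · have : reg (fun x => limU F (fun τ => τ.toFun x)) a = limU F (fun τ => τ.toFun a) := by
        obtain ⟨n, hn⟩ := le_norm_mul SB ha ha0
        rw [reg_eq ha0]
        apply le_antisymm
        · refine iSup₂_le fun ε hε => limU_mono F (Eventually.of_forall fun τ => τ.cut_le ha0 hε.le)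
        · set S := ⨆ (ε : ℝ) (_ : 0 < ε), limU F (fun τ => τ.toFun (cut ε a)) with hS
          have key : ∀ ε : ℝ, 0 < ε → limU F (fun τ => τ.toFun a) ≤ S + ENNReal.ofReal ε * n := by
            intro ε hε
            refine le_trans ?_ (add_le_add (le_iSup₂_of_le ε hε le_rfl) le_rfl)
            refine le_of_tendsto_of_tendsto (tendsto_limU F _)
              ((tendsto_limU F fun τ => τ.toFun (cut ε a)).add
                (tendsto_const_nhds (x := ENNReal.ofReal ε * n))) ?_
            filter_upwards [hF'] with τ hτ
            exact (hn τ hτ).2 ε hε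
          have ht : Tendsto (fun ε : ℝ => S + ENNReal.ofReal ε * n) (𝓝[>] 0) (𝓝 S) := by
            have h0 : Tendsto (fun ε : ℝ => ENNReal.ofReal ε) (𝓝[>] 0) (𝓝 0) := by
              have := (ENNReal.continuous_ofReal.tendsto 0).mono_left
                (nhdsWithin_le_nhds (s := Set.Ioi 0))
              simpa using this
            have h1 := ENNReal.Tendsto.mul_const (b := (n : ℝ≥0∞)) h0
              (Or.inr (ENNReal.natCast_ne_top n))
            have h2 := (tendsto_const_nhds (x := S)).add h1
            simpa using h2
          refine ge_of_tendsto ht ?_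
          filter_upwards [self_mem_nhdsWithin] with ε hε using key ε hε
      rw [this]; exact tendsto_limU F _
    · have h0 : ∀ τ : QuasiTrace W, τ.toFun a = 0 := fun τ => τ.zero_of_not_nonneg a ha0
      simp only [h0, reg, ha0, if_false]
      exact tendsto_const_nhds
  exact ⟨limQT SB F hF', isClosed_closure.mem_of_tendsto hlim hF', hlim⟩

end Compact6

section Gap7
set_option linter.unusedSectionVars false
set_option linter.unusedVariables false

variable {A W : Type*} [NonUnitalCStarAlgebra A] [PartialOrder A] [StarOrderedRing A]
  [NonUnitalCStarAlgebra W] [PartialOrder W] [StarOrderedRing W]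

lemma uniform_gap (SB : Stabilization A W) {a b : W} (ha : 0 ≤ a) (hb : 0 ≤ b)
    (hlt : ∀ τ ∈ closure (QTSet SB), dTau τ a < dTau τ b)
    (hω : omegaOn (closure (QTSet SB)) a = 0) :
    ∃ (n : ℕ) (κ : NNReal), 0 < κ ∧ ∀ τ ∈ closure (QTSet SB),
      dTau τ a + κ ≤ τ.toFun (fEps (1 / (n + 1)) b) := by
  refine (isCompact_closure SB).induction_on
    (p := fun s => ∃ (n : ℕ) (κ : NNReal), 0 < κ ∧ ∀ τ ∈ s,
      dTau τ a + κ ≤ τ.toFun (fEps (1 / (n + 1)) b)) ?_ ?_ ?_ ?_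
  · exact ⟨0, 1, one_pos, by simp⟩
  · rintro s t hst ⟨n, κ, hκ, h⟩
    exact ⟨n, κ, hκ, fun τ hτ => h τ (hst hτ)⟩
  · rintro s t ⟨n, κ, hκ, h⟩ ⟨n', κ', hκ', h'⟩
    have hm : ∀ (k l : ℕ), k ≤ l → ∀ τ : QuasiTrace W,
        τ.toFun (fEps (1 / (k + 1)) b) ≤ τ.toFun (fEps (1 / (l + 1)) b) := by
      intro k l hkl τ
      refine τ.pqt.fEps_anti hb (by positivity) ?_
      have : (k : ℝ) ≤ l := by exact_mod_cast hkl
      gcongr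
    refine ⟨max n n', min κ κ', lt_min hκ hκ', ?_⟩
    rintro τ (hτ | hτ)
    · refine le_trans (le_trans ?_ (h τ hτ)) (hm _ _ (le_max_left _ _) τ)
      gcongr; exact min_le_left _ _
    · refine le_trans (le_trans ?_ (h' τ hτ)) (hm _ _ (le_max_right _ _) τ)
      gcongr; exact min_le_right _ _
  · intro τ₀ hτ₀
    have h1 := hlt τ₀ hτ₀
    rw [dTau.eq_1 τ₀ b, lt_iSup_iff] at h1
    obtain ⟨n, h1⟩ := h1
    obtain ⟨r, hr, h2⟩ := ENNReal.lt_iff_exists_add_pos_lt.mp h1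
    set κ : NNReal := r / 2 with hκdef
    have hκ : 0 < κ := by positivity
    have hr2 : (r : ℝ≥0∞) = κ + κ := by
      rw [← ENNReal.coe_add, hκdef, add_halves]
    have h3 : omegaOn (closure (QTSet SB)) a < κ := by rw [hω]; exact_mod_cast hκ
    unfold omegaOn at h3
    rw [iInf_lt_iff] at h3
    obtain ⟨m, h3⟩ := h3
    have h4 : ∀ τ ∈ closure (QTSet SB), dTau τ a ≤ τ.toFun (fEps (1 / (m + 1)) a) + κ := by
      intro τ hτ
      have h5 : dTau τ a - τ.toFun (fEps (1 / (m + 1)) a) ≤ κ :=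
        le_trans (le_iSup₂ (f := fun (τ : QuasiTrace W) (_ : τ ∈ closure (QTSet SB)) =>
          dTau τ a - τ.toFun (fEps (1 / (m + 1)) a)) τ hτ) h3.le
      rw [tsub_le_iff_right, add_comm] at h5
      exact h5
    have ho : IsOpen {τ : QuasiTrace W | τ.toFun (fEps (1 / (m + 1)) a) + r <
        τ.toFun (fEps (1 / (n + 1)) b)} :=
      isOpen_lt ((QuasiTrace.eval_cont (fEps_mem_pedersen ha (by positivity))).add continuous_const)
        (QuasiTrace.eval_cont (fEps_mem_pedersen hb (by positivity)))
    refine ⟨_, inter_mem self_mem_nhdsWithin (mem_nhdsWithin_of_mem_nhds (ho.mem_nhds ?_)),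
      n, κ, hκ, ?_⟩
    · exact lt_of_le_of_lt (add_le_add (fEps_le_dTau τ₀ ha (by positivity)) le_rfl) h2
    · rintro τ ⟨hτ, hτ2⟩
      have hτ2' : τ.toFun (fEps (1 / (m + 1)) a) + r < τ.toFun (fEps (1 / (n + 1)) b) := hτ2
      refine le_trans (add_le_add (h4 τ hτ) le_rfl) ?_
      rw [add_assoc, ← hr2]
      exact hτ2'.le

end Gap7

section Nil8
set_option linter.unusedSectionVars false
set_option linter.unusedVariables false

variable {A : Type*} [NonUnitalCStarAlgebra A] [PartialOrder A] [StarOrderedRing A]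

lemma simple_prime (hs : IsSimpleCStar A) {x y : A} (hx : x ≠ 0) (hy : y ≠ 0) :
    ∃ w, x * w * y ≠ 0 := by
  by_contra hcon
  push Not at hcon
  set I : TwoSidedIdeal A := TwoSidedIdeal.mk' {z : A | ∀ w, x * w * z = 0}
    (by simp) (by intro a b ha hb w; rw [mul_add, ha w, hb w, add_zero])
    (by intro a ha w; rw [mul_neg, ha w, neg_zero])
    (by intro a b hb w; rw [← mul_assoc, mul_assoc x, hb])
    (by intro a b ha w; rw [← mul_assoc, ha w, zero_mul]) with hI
  have hIc : (I : Set A) = {z : A | ∀ w, x * w * z = 0} := TwoSidedIdeal.coe_mk' _ _ _ _ _ _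
  have hcl : IsClosed (I : Set A) := by
    rw [hIc, Set.ofPred_forall]
    exact isClosed_iInter fun w => isClosed_eq (by fun_prop) continuous_const
  rcases hs.2 I hcl with h | h
  · have : y ∈ (I : Set A) := by rw [hIc]; exact hcon
    rw [h] at this
    exact hy this
  · have h1 : x * star x ∈ (I : Set A) := by rw [h]; trivial
    rw [hIc] at h1
    have h2 := h1 (star x)
    have h3 : star (x * star x) * (x * star x) = 0 := by
      rw [star_mul, star_star]; exact h2
    rw [CStarRing.star_mul_self_eq_zero_iff, CStarRing.mul_star_self_eq_zero_iff] at h3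
    exact hx h3

lemma span_eq_top (hs : IsSimpleCStar A) (halg : pedersen A = Set.univ) {p : A} (hp : p ≠ 0)
    (hpp : p * p = p) : Submodule.span ℂ {z : A | ∃ x y, z = x * p * y} = ⊤ := by
  set J := Submodule.span ℂ {z : A | ∃ x y, z = x * p * y} with hJ
  have hr : ∀ x ∈ J, ∀ b, x * b ∈ J := by
    intro x hx b
    refine Submodule.span_induction (p := fun x _ => x * b ∈ J) ?_ (by simp) ?_ ?_ hx
    · rintro _ ⟨y, z, rfl⟩
      exact Submodule.subset_span ⟨y, z * b, by simp only [mul_assoc]⟩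
    · intro x y _ _ h1 h2; rw [add_mul]; exact J.add_mem h1 h2
    · intro r x _ h1; rw [smul_mul_assoc]; exact J.smul_mem _ h1
  have hl : ∀ x ∈ J, ∀ b, b * x ∈ J := by
    intro x hx b
    refine Submodule.span_induction (p := fun x _ => b * x ∈ J) ?_ (by simp) ?_ ?_ hx
    · rintro _ ⟨y, z, rfl⟩
      exact Submodule.subset_span ⟨b * y, z, by simp only [mul_assoc]⟩
    · intro x y _ _ h1 h2; rw [mul_add]; exact J.add_mem h1 h2
    · intro r x _ h1; rw [mul_smul_comm]; exact J.smul_mem _ h1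
  have hpJ : p ∈ J := Submodule.subset_span ⟨p, p, by rw [hpp, hpp]⟩
  set I : TwoSidedIdeal A := TwoSidedIdeal.mk' (closure (J : Set A))
    (subset_closure J.zero_mem)
    (fun {a b} ha hb => J.topologicalClosure.add_mem ha hb)
    (fun {a} ha => J.topologicalClosure.neg_mem ha)
    (fun {a b} hb => map_mem_closure (f := fun z => a * z) (by fun_prop) hb (fun z hz => hl z hz a))
    (fun {a b} ha => map_mem_closure (f := fun z => z * b) (by fun_prop) ha (fun z hz => hr z hz b))
    with hI
  have hIc : (I : Set A) = closure (J : Set A) := TwoSidedIdeal.coe_mk' _ _ _ _ _ _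
  have hun : closure (J : Set A) = Set.univ := by
    rcases hs.2 I (by rw [hIc]; exact isClosed_closure) with h | h
    · rw [hIc] at h
      have : p ∈ closure (J : Set A) := subset_closure hpJ
      rw [h] at this
      exact absurd this hp
    · rw [← hIc, h]
  rw [eq_top_iff]
  intro x _
  have hx : x ∈ pedersen A := by rw [halg]; trivial
  unfold pedersen pedersenIn at hx
  simp only [Set.mem_iInter, Set.mem_ofPred_eq] at hx
  exact hx J ⟨⟨Set.subset_univ _, J.zero_mem, fun x hx y hy => J.add_mem hx hy,
      fun x hx => J.neg_mem hx, fun x hx b _ => ⟨hr x hx b, hl x hx b⟩⟩, hun.ge⟩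

lemma sq_eq_of_noNil (hs : IsSimpleCStar A) {x : A} (hx : 0 ≤ x)
    (hN : ∀ w, (x * w * x) * (x * w * x) = 0 → x * w * x = 0) : x * x = ‖x‖ • x := by
  have hxs : IsSelfAdjoint x := .of_nonneg hx
  rcases eq_or_ne x 0 with rfl | hx0
  · simp
  set l := ‖x‖ with hl
  have hlpos : 0 < l := norm_pos_iff.mpr hx0
  have key : ∀ s : ℝ, 0 < s → s < l → ∀ t ∈ quasispectrum ℝ x, t ≤ 0 ∨ s ≤ t := by
    intro s hs0 hsl t ht
    have ec : cfcₙ (fun u : ℝ => u * max 0 (s - u) * u) x =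
        cfcₙ (fun u : ℝ => u * max 0 (s - u)) x * x := by
      rw [cfcₙ_mul (fun u : ℝ => u * max 0 (s - u)) (fun u => u) x (by fun_prop) (by simp)
        (by fun_prop) rfl, cfcₙ_id' ℝ x]
    have ed : cfcₙ (fun u : ℝ => u * max (u - s) 0) x = x * cfcₙ (fun u : ℝ => max (u - s) 0) x := by
      rw [cfcₙ_mul (fun u : ℝ => u) (fun u : ℝ => max (u - s) 0) x (by fun_prop) rfl
        (by fun_prop) (by simpa using hs0.le), cfcₙ_id' ℝ x]
    set F := cfcₙ (fun u : ℝ => u * max 0 (s - u)) x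
    set G := cfcₙ (fun u : ℝ => max (u - s) 0) x
    have e0 : (F * x) * (x * G) = 0 := by
      rw [← ec, ← ed, ← cfcₙ_mul (fun u : ℝ => u * max 0 (s - u) * u) (fun u : ℝ => u * max (u - s) 0)
        x (by fun_prop) (by simp) (by fun_prop) (by simp), ← cfcₙ_const_zero ℝ x]
      refine cfcₙ_congr fun u _ => ?_
      rcases le_total u s with h | h
      · simp [max_eq_right (show u - s ≤ 0 by linarith)]
      · simp [max_eq_left (show s - u ≤ 0 by linarith)]
    have hG : x * G ≠ 0 := by
      intro h0
      rw [← ed, ← cfcₙ_const_zero ℝ x] at h0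
      have h1 := eqOn_of_cfcₙ_eq_cfcₙ h0 hxs (by fun_prop) (by simp) (by fun_prop) rfl
      have : ‖x‖ ≤ s := by
        conv_lhs => rw [← cfcₙ_id' ℝ x]
        refine norm_cfcₙ_le fun u hu => ?_
        have h2 := h1 hu
        have h3 := (qs_bound hx hu).1
        simp only at h2
        rw [Real.norm_of_nonneg h3]
        by_contra hlt
        push Not at hlt
        rw [max_eq_left (by linarith)] at h2
        nlinarith
      linarith
    have hF : F * x = 0 := by
      by_contra hF
      obtain ⟨w, hw⟩ := simple_prime hs hG hF
      apply hw
      have : x * G * w * (F * x) = x * (G * w * F) * x := by simp only [mul_assoc]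
      rw [this]
      apply hN
      rw [← this]
      have : x * G * w * (F * x) * (x * G * w * (F * x)) =
        x * G * w * ((F * x) * (x * G)) * w * (F * x) := by simp only [mul_assoc]
      rw [this, e0]; simp
    rw [← ec, ← cfcₙ_const_zero ℝ x] at hF
    have h1 := eqOn_of_cfcₙ_eq_cfcₙ hF hxs (by fun_prop) (by simp) (by fun_prop) rfl ht
    simp only at h1
    by_contra hcon
    push Not at hcon
    rw [max_eq_right (by linarith)] at h1
    have : 0 < t * (s - t) * t := mul_pos (mul_pos hcon.1 (by linarith)) hcon.1
    linarith
  have e1 : x * x = cfcₙ (fun t : ℝ => t * t) x := by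
    rw [cfcₙ_mul (fun t : ℝ => t) (fun t => t) x, cfcₙ_id' ℝ x]
  have e2 : l • x = cfcₙ (fun t : ℝ => l • t) x := by
    rw [cfcₙ_smul l (fun t : ℝ => t) x, cfcₙ_id' ℝ x]
  rw [e1, e2]
  refine cfcₙ_congr fun t ht => ?_
  obtain ⟨h0, hle⟩ := qs_bound hx ht
  rcases h0.eq_or_lt with h | h
  · simp [← h]
  · have : t = l := by
      refine le_antisymm hle ?_
      by_contra hlt
      push Not at hlt
      rcases key ((t + l) / 2) (by linarith) (by linarith) t ht with h' | h' <;> linarith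
    simp [this]

/-- Absence of nilpotents forces a minimal projection. -/
lemma exists_minimal (hs : IsSimpleCStar A) {c : A} (hc : 0 ≤ c) (hc0 : c ≠ 0)
    (hN : ∀ w, (c * w * c) * (c * w * c) = 0 → c * w * c = 0) :
    ∃ p : A, p ≠ 0 ∧ star p = p ∧ p * p = p ∧ ∀ x, ∃ r : ℂ, p * x * p = r • p := by
  have hl : 0 < ‖c‖ := norm_pos_iff.mpr hc0
  have hcc := sq_eq_of_noNil hs hc hN
  set l := ‖c‖ with hldef
  set p : A := l⁻¹ • c with hp
  have hcp : c = l • p := by rw [hp, smul_inv_smul₀ hl.ne']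
  have hp0 : 0 ≤ p := smul_nonneg (by positivity) hc
  have hps : star p = p := (IsSelfAdjoint.of_nonneg hp0).star_eq
  have hpp : p * p = p := by
    rw [hp, smul_mul_smul_comm, hcc, smul_smul]
    congr 1; field_simp
  have hpne : p ≠ 0 := by
    intro h; rw [h, smul_zero] at hcp; exact hc0 hcp
  have hNp : ∀ z, p * z * p = z → z * z = 0 → z = 0 := by
    intro z hz hzz
    have e : c * (l⁻¹ • (l⁻¹ • z)) * c = z := by
      rw [hcp]
      simp only [smul_mul_assoc, mul_smul_comm, hz, smul_smul]
      rw [show l * (l⁻¹ * l⁻¹ * l) = 1 by field_simp, one_smul]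
    have := hN (l⁻¹ • (l⁻¹ • z))
    rw [e] at this
    exact this hzz
  have hsq : ∀ x, 0 ≤ x → p * x = x → x * p = x → x * x = ‖x‖ • x := by
    intro x hx h1 h2
    refine sq_eq_of_noNil hs hx fun w hw => hNp _ ?_ hw
    have : p * (x * w * x) * p = (p * x) * w * (x * p) := by simp only [mul_assoc]
    rw [this, h1, h2]
  have hpos : ∀ x, 0 ≤ x → p * x = x → x * p = x → x = ‖x‖ • p := by
    intro x hx h1 h2
    rcases eq_or_ne x 0 with rfl | hx0
    · simp
    have hm : 0 < ‖x‖ := norm_pos_iff.mpr hx0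
    have hxx := hsq x hx h1 h2
    set m := ‖x‖ with hmdef
    set q := m⁻¹ • x with hq
    have hxq : x = m • q := by rw [hq, smul_inv_smul₀ hm.ne']
    have hq0 : 0 ≤ q := smul_nonneg (by positivity) hx
    have hqne : q ≠ 0 := by
      intro h; rw [h, smul_zero] at hxq; exact hx0 hxq
    have hqq : q * q = q := by
      rw [hq, smul_mul_smul_comm, hxx, smul_smul]
      congr 1; field_simp
    have hpq : p * q = q := by rw [hq, mul_smul_comm, h1]
    have hqp : q * p = q := by rw [hq, smul_mul_assoc, h2]
    have h3 := hsq (p + q) (add_nonneg hp0 hq0) (by rw [mul_add, hpp, hpq])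
      (by rw [add_mul, hpp, hqp])
    set μ := ‖p + q‖
    have h4 : p + q + (q + q) = μ • (p + q) := by
      rw [← h3, mul_add, add_mul, add_mul, hpp, hpq, hqp, hqq]
    have h5 : (4 : ℝ) • q = (2 * μ) • q := by
      have := congrArg (fun z => q * z) h4
      simp only [mul_add, mul_smul_comm, hqp, hqq] at this
      rw [mul_comm, mul_smul, two_smul, ← this]
      rw [show (4 : ℝ) = 1 + 1 + (1 + 1) by norm_num]
      simp only [add_smul, one_smul]
    have h6 : μ = 2 := by
      have := smul_left_injective ℝ hqne h5
      linarith
    rw [h6, two_smul] at h4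
    have h7 : q = p := by
      have e1 : p + q + (q + q) - (p + q) - q = q := by abel
      have e2 : p + q + (p + q) - (p + q) - q = p := by abel
      rw [← e1, h4, e2]
    rw [← h7]; exact hxq
  clear_value p
  refine ⟨p, hpne, hps, hpp, fun x => ?_⟩
  have hx : x ∈ Submodule.span ℂ {a : A | 0 ≤ a} := by
    rw [CStarAlgebra.span_nonneg]; trivial
  refine Submodule.span_induction (p := fun x _ => ∃ r : ℂ, p * x * p = r • p) ?_ ⟨0, by simp⟩
    ?_ ?_ hx
  · intro y hy
    have hy' : 0 ≤ y := hy
    have h1 : 0 ≤ p * y * p := by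
      have := star_left_conjugate_nonneg hy' p
      rwa [hps] at this
    refine ⟨(‖p * y * p‖ : ℂ), ?_⟩
    have := hpos (p * y * p) h1 (by rw [← mul_assoc, ← mul_assoc, hpp])
      (by rw [mul_assoc, hpp])
    conv_lhs => rw [this]
    rfl
  · rintro y z _ _ ⟨r, hr⟩ ⟨r', hr'⟩
    exact ⟨r + r', by rw [mul_add, add_mul, hr, hr', add_smul]⟩
  · rintro k y _ ⟨r, hr⟩
    exact ⟨k * r, by rw [mul_smul_comm, smul_mul_assoc, hr, mul_smul]⟩

end Nil8

section Elem9
set_option linter.unusedSectionVars false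
set_option linter.unusedVariables false

variable {A : Type*} [NonUnitalCStarAlgebra A] [PartialOrder A] [StarOrderedRing A]

lemma finiteDim_of_minimal (hσ : SigmaUnital A) (hs : IsSimpleCStar A)
    (halg : pedersen A = Set.univ) {p : A} (hp : p ≠ 0) (hpp : p * p = p)
    (hmin : ∀ x, ∃ r : ℂ, p * x * p = r • p) : FiniteDimensional ℂ A := by
  obtain ⟨h, h0, hh⟩ := hσ
  have hspan := span_eq_top hs halg hp hpp
  have hhs : h ∈ Submodule.span ℂ {z : A | ∃ x y, z = x * p * y} := by rw [hspan]; trivial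
  obtain ⟨n, f, g, hfg⟩ := Submodule.mem_span_set'.mp hhs
  choose x y hg using fun i => (g i).2
  choose χ hχ using hmin
  have hsum : h = ∑ i, (f i • x i) * p * y i := by
    rw [← hfg]
    refine Finset.sum_congr rfl fun i _ => ?_
    rw [hg i, smul_mul_assoc, smul_mul_assoc]
  set X : Fin n → A := fun i => f i • x i
  set V : Submodule ℂ A := Submodule.span ℂ (Set.range fun ij : Fin n × Fin n => X ij.1 * p * y ij.2)
    with hV
  have hVfd : FiniteDimensional ℂ V := FiniteDimensional.span_of_finite ℂ (Set.finite_range _)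
  have hVc : IsClosed (V : Set A) := V.closed_of_finiteDimensional
  have hsub : {z : A | ∃ a, z = h * a * h} ⊆ (V : Set A) := by
    rintro _ ⟨a, rfl⟩
    have e : h * a * h = ∑ i, ∑ j, χ (y i * a * X j) • (X i * p * y j) := by
      conv_lhs => rw [hsum]
      rw [Finset.sum_mul, Finset.sum_mul]
      refine Finset.sum_congr rfl fun i _ => ?_
      rw [Finset.mul_sum]
      refine Finset.sum_congr rfl fun j _ => ?_
      have e1 : X i * p * y i * a * (X j * p * y j) =
          X i * (p * (y i * a * X j) * p) * y j := by simp only [mul_assoc]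
      rw [e1, hχ, mul_smul_comm, smul_mul_assoc]
    change h * a * h ∈ V
    rw [e]
    exact V.sum_mem fun i _ => V.sum_mem fun j _ =>
      V.smul_mem _ (Submodule.subset_span ⟨(i, j), rfl⟩)
  have htop : V = ⊤ := by
    rw [eq_top_iff]
    intro z _
    have : z ∈ her h := by rw [hh]; trivial
    exact closure_minimal hsub hVc this
  rw [htop] at hVfd
  exact Module.Finite.equiv Submodule.topEquiv

lemma pos_scalar {p z : A} (hp : p ≠ 0) (hps : star p = p) (hpp : p * p = p) (hz : z ≠ 0) {r : ℂ}
    (h : star z * z = r • p) : ∃ s : ℂ, s ≠ 0 ∧ (starRingEnd ℂ) s * s * r = 1 := by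
  have hp0 : 0 ≤ p := by
    have := star_mul_self_nonneg p
    rwa [hps, hpp] at this
  have h1 : (starRingEnd ℂ) r • p = r • p := by
    rw [← h]
    have := congrArg star h
    rw [star_smul, hps, star_mul, star_star] at this
    exact this.symm
  have h2 := smul_left_injective ℂ hp h1
  obtain ⟨ρ, rfl⟩ := Complex.conj_eq_iff_real.mp h2
  have h3 : star z * z = ρ • p := h
  have h4 : 0 < ρ := by
    by_contra hcon
    push Not at hcon
    have h5 : 0 ≤ star z * z := star_mul_self_nonneg z
    have h6 : star z * z ≤ 0 := by
      rw [h3, ← neg_nonneg, ← neg_smul]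
      exact smul_nonneg (by linarith) hp0
    have h7 := le_antisymm h6 h5
    rw [CStarRing.star_mul_self_eq_zero_iff] at h7
    exact hz h7
  refine ⟨((Real.sqrt ρ)⁻¹ : ℝ), ?_, ?_⟩
  · have := Real.sqrt_pos.mpr h4
    exact_mod_cast (inv_pos.mpr this).ne'
  · rw [Complex.conj_ofReal]
    norm_cast
    rw [← mul_inv, Real.mul_self_sqrt h4.le, inv_mul_cancel₀ h4.ne']

lemma exists_frame [FiniteDimensional ℂ A] {p : A} (hp : p ≠ 0) (hps : star p = p)
    (hpp : p * p = p) (hmin : ∀ x, ∃ r : ℂ, p * x * p = r • p) :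
    ∃ (n : ℕ) (e : Fin n → A), (∀ i, e i * p = e i) ∧
      (∀ i j, star (e i) * e j = if i = j then p else 0) ∧
      ∀ x, (∑ k, e k * star (e k)) * (x * p) = x * p := by
  classical
  set P : ℕ → Prop := fun n => ∃ e : Fin n → A, (∀ i, e i * p = e i) ∧
      (∀ i j, star (e i) * e j = if i = j then p else 0) with hP
  have hbound : ∀ n, P n → n ≤ Module.finrank ℂ A := by
    rintro n ⟨e, h1, h2⟩
    have hli : LinearIndependent ℂ e := by
      rw [Fintype.linearIndependent_iff]
      intro g hg i
      have := congrArg (fun z => star (e i) * z) hg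
      simp only [Finset.mul_sum, mul_smul_comm, h2, mul_zero] at this
      simp only [smul_ite, smul_zero, Finset.sum_ite_eq, Finset.mem_univ, if_true] at this
      exact (smul_eq_zero.mp this).resolve_right hp
    simpa using hli.fintype_card_le_finrank
  have hmax : ∃ n, P n ∧ ¬ P (n + 1) := by
    by_contra hcon
    push Not at hcon
    have hall : ∀ n, P n := by
      intro n
      induction n with
      | zero => exact ⟨Fin.elim0, fun i => i.elim0, fun i => i.elim0⟩
      | succ n ih => exact hcon n ih
    have := hbound _ (hall (Module.finrank ℂ A + 1))
    omega
  obtain ⟨n, ⟨e, h1, h2⟩, hn⟩ := hmax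
  have h1' : ∀ i, p * star (e i) = star (e i) := by
    intro i
    have := congrArg star (h1 i)
    rwa [star_mul, hps] at this
  refine ⟨n, e, h1, h2, fun x => ?_⟩
  by_contra hne
  apply hn
  set z : A := x * p - (∑ k, e k * star (e k)) * (x * p) with hz
  have hz0 : z ≠ 0 := fun h => hne (sub_eq_zero.mp h).symm
  have hzp : z * p = z := by
    rw [hz, sub_mul, mul_assoc, hpp, mul_assoc _ (x * p), mul_assoc x, hpp]
  have hez : ∀ i, star (e i) * z = 0 := by
    intro i
    rw [hz, mul_sub, Finset.sum_mul, Finset.mul_sum, Finset.sum_eq_single i]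
    · have : star (e i) * (e i * star (e i) * (x * p)) =
          (star (e i) * e i) * star (e i) * (x * p) := by simp only [mul_assoc]
      rw [this, h2, if_pos rfl, h1', sub_self]
    · intro j _ hj
      have : star (e i) * (e j * star (e j) * (x * p)) =
          (star (e i) * e j) * star (e j) * (x * p) := by simp only [mul_assoc]
      rw [this, h2, if_neg hj.symm, zero_mul, zero_mul]
    · simp
  have hze : ∀ i, star z * e i = 0 := by
    intro i
    have := congrArg star (hez i)
    rwa [star_mul, star_star, star_zero] at this
  obtain ⟨r, hr⟩ := hmin (star z * z)
  have hzz : star z * z = r • p := by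
    rw [← hr]
    have : p * (star z * z) * p = (p * star z) * (z * p) := by simp only [mul_assoc]
    rw [this, hzp]
    have h3 := congrArg star hzp
    rw [star_mul, hps] at h3
    rw [h3]
  obtain ⟨s, hs0, hs⟩ := pos_scalar hp hps hpp hz0 hzz
  refine ⟨Fin.snoc (α := fun _ => A) e (s • z), ?_, ?_⟩
  · intro i
    refine Fin.lastCases ?_ (fun i => ?_) i
    · rw [Fin.snoc_last, smul_mul_assoc, hzp]
    · rw [Fin.snoc_castSucc, h1]
  · intro i j
    refine Fin.lastCases ?_ (fun i => ?_) i
    · refine Fin.lastCases ?_ (fun j => ?_) j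
      · rw [Fin.snoc_last, if_pos rfl, star_smul, smul_mul_smul_comm, hzz, smul_smul]
        change ((starRingEnd ℂ) s * s * r) • p = p
        rw [hs, one_smul]
      · rw [Fin.snoc_last, Fin.snoc_castSucc, star_smul, smul_mul_assoc, hze, smul_zero,
          if_neg (Fin.castSucc_ne_last j).symm]
    · refine Fin.lastCases ?_ (fun j => ?_) j
      · rw [Fin.snoc_last, Fin.snoc_castSucc, mul_smul_comm, hez, smul_zero,
          if_neg (Fin.castSucc_ne_last i)]
      · rw [Fin.snoc_castSucc, Fin.snoc_castSucc, h2]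
        simp

lemma isElementary_of_minimal (hσ : SigmaUnital A) (hs : IsSimpleCStar A)
    (halg : pedersen A = Set.univ) {p : A} (hp : p ≠ 0) (hps : star p = p) (hpp : p * p = p)
    (hmin : ∀ x, ∃ r : ℂ, p * x * p = r • p) : IsElementary A := by
  classical
  have hfd := finiteDim_of_minimal hσ hs halg hp hpp hmin
  obtain ⟨n, e, h1, h2, h3⟩ := exists_frame hp hps hpp hmin
  have h1' : ∀ i, p * star (e i) = star (e i) := by
    intro i
    have := congrArg star (h1 i)
    rwa [star_mul, hps] at this
  set u := ∑ k, e k * star (e k) with hu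
  have hus : star u = u := by
    rw [hu, star_sum]
    refine Finset.sum_congr rfl fun k _ => ?_
    rw [star_mul, star_star]
  have hua : ∀ a, u * a = a := by
    intro a
    have ha : a ∈ Submodule.span ℂ {z : A | ∃ x y, z = x * p * y} := by
      rw [span_eq_top hs halg hp hpp]; trivial
    refine Submodule.span_induction (p := fun a _ => u * a = a) ?_ (by simp) ?_ ?_ ha
    · rintro _ ⟨x, y, rfl⟩
      rw [← mul_assoc, h3]
    · intro x y _ _ hx hy; rw [mul_add, hx, hy]
    · intro r x _ hx; rw [mul_smul_comm, hx]
  have hau : ∀ a, a * u = a := by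
    intro a
    have := congrArg star (hua (star a))
    rwa [star_mul, star_star, hus] at this
  choose χ hχ using hmin
  have hχe : ∀ a i j, star (e i) * a * e j = χ (star (e i) * a * e j) • p := by
    intro a i j
    rw [← hχ]
    have : p * (star (e i) * a * e j) * p = (p * star (e i)) * a * (e j * p) := by
      simp only [mul_assoc]
    rw [this, h1, h1']
  set φ : A → Matrix (Fin n) (Fin n) ℂ := fun a => Matrix.of fun i j => χ (star (e i) * a * e j)
    with hφ
  have hφs : ∀ a i j, star (e i) * a * e j = φ a i j • p := hχe
  have hinj := smul_left_injective ℂ hp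
  have hφu : ∀ a (M : Matrix (Fin n) (Fin n) ℂ), (∀ i j, star (e i) * a * e j = M i j • p) →
      φ a = M := by
    intro a M h
    ext i j
    refine hinj ?_
    simp only
    rw [← hφs, h]
  clear_value φ
  have hadd : ∀ a b, φ (a + b) = φ a + φ b := fun a b => hφu _ _ fun i j => by
    rw [mul_add, add_mul, hφs, hφs, Matrix.add_apply, add_smul]
  have hsmul : ∀ (c : ℂ) a, φ (c • a) = c • φ a := fun c a => hφu _ _ fun i j => by
    rw [mul_smul_comm, smul_mul_assoc, hφs, Matrix.smul_apply, smul_smul, smul_eq_mul]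
  have hmul : ∀ a b, φ (a * b) = φ a * φ b := fun a b => hφu _ _ fun i j => by
    rw [Matrix.mul_apply, Finset.sum_smul]
    have e1 : star (e i) * (a * b) * e j = star (e i) * a * (u * b * e j) := by
      rw [hua]; simp only [mul_assoc]
    rw [e1, hu, Finset.sum_mul, Finset.sum_mul, Finset.mul_sum]
    refine Finset.sum_congr rfl fun k _ => ?_
    have e2 : star (e i) * a * (e k * star (e k) * b * e j) =
        (star (e i) * a * e k) * (star (e k) * b * e j) := by simp only [mul_assoc]
    rw [e2, hφs, hφs, smul_mul_smul_comm, hpp]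
  have hstar : ∀ a, φ (star a) = star (φ a) := fun a => hφu _ _ fun i j => by
    have := congrArg star (hφs a j i)
    rw [star_mul, star_mul, star_star, star_smul, hps, ← mul_assoc] at this
    rw [this]; rfl
  have hzero : φ 0 = 0 := by
    have := hsmul 0 0
    simpa using this
  have hinjφ : ∀ a, φ a = 0 → a = 0 := by
    intro a ha
    rw [← hua a, ← hau (u * a), hu, Finset.sum_mul, Finset.sum_mul_sum]
    refine Finset.sum_eq_zero fun i _ => Finset.sum_eq_zero fun j _ => ?_
    have : e i * star (e i) * a * (e j * star (e j)) =
        e i * (star (e i) * a * e j) * star (e j) := by simp only [mul_assoc]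
    rw [this, hφs, ha]; simp
  have hsurj : ∀ M, ∃ a, φ a = M := by
    intro M
    refine ⟨∑ i, ∑ j, M i j • (e i * star (e j)), hφu _ _ fun k l => ?_⟩
    rw [Finset.mul_sum, Finset.sum_mul, Finset.sum_eq_single k]
    · rw [Finset.mul_sum, Finset.sum_mul, Finset.sum_eq_single l]
      · rw [mul_smul_comm, smul_mul_assoc]
        have : star (e k) * (e k * star (e l)) * e l = (star (e k) * e k) * (star (e l) * e l) := by
          simp only [mul_assoc]
        rw [this, h2, h2, if_pos rfl, if_pos rfl, hpp]
      · intro j _ hj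
        rw [mul_smul_comm, smul_mul_assoc, mul_assoc, mul_assoc, h2, if_neg hj]; simp
      · simp
    · intro i _ hi
      rw [Finset.mul_sum, Finset.sum_mul]
      refine Finset.sum_eq_zero fun j _ => ?_
      rw [mul_smul_comm, smul_mul_assoc, ← mul_assoc, h2, if_neg hi.symm]; simp
    · simp
  let Ψ : A →⋆ₙₐ[ℂ] (EuclideanSpace ℂ (Fin n) →L[ℂ] EuclideanSpace ℂ (Fin n)) :=
    { toFun := fun a => Matrix.toEuclideanCLM (n := Fin n) (𝕜 := ℂ) (φ a)
      map_smul' := fun c a => by rw [hsmul, map_smul]; rfl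
      map_zero' := by rw [hzero, map_zero]
      map_add' := fun a b => by rw [hadd, map_add]
      map_mul' := fun a b => by rw [hmul, map_mul]
      map_star' := fun a => by rw [hstar, map_star] }
  refine ⟨EuclideanSpace ℂ (Fin n), inferInstance, inferInstance, inferInstance, Ψ, ?_, ?_⟩
  · rw [injective_iff_map_eq_zero]
    intro a ha
    refine hinjφ a ?_
    have ha' : Matrix.toEuclideanCLM (n := Fin n) (𝕜 := ℂ) (φ a) = 0 := ha
    rw [← map_zero (Matrix.toEuclideanCLM (n := Fin n) (𝕜 := ℂ))] at ha'
    exact (Matrix.toEuclideanCLM (n := Fin n) (𝕜 := ℂ)).injective ha'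
  · ext T
    constructor
    · intro _
      have h5 : IsCompactOperator (id : EuclideanSpace ℂ (Fin n) → EuclideanSpace ℂ (Fin n)) :=
        (isCompactOperator_id_iff_finiteDimensional (𝕜 := ℂ)).mpr inferInstance
      exact h5.comp_clm T
    · intro _
      obtain ⟨M, hM⟩ := (Matrix.toEuclideanCLM (n := Fin n) (𝕜 := ℂ)).surjective T
      obtain ⟨a, rfl⟩ := hsurj M
      exact ⟨a, hM⟩

/-- Existence of nilpotents below any nonzero positive element. -/
lemma exists_nilpotent (hσ : SigmaUnital A) (hs : IsSimpleCStar A) (hne : ¬ IsElementary A)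
    (halg : pedersen A = Set.univ) {c : A} (hc : 0 ≤ c) (hc0 : c ≠ 0) :
    ∃ w, c * w * c ≠ 0 ∧ (c * w * c) * (c * w * c) = 0 := by
  by_contra hcon
  push Not at hcon
  obtain ⟨p, hp, hps, hpp, hmin⟩ := exists_minimal hs hc hc0 fun w hw => by
    by_contra h; exact hcon w h hw
  exact hne (isElementary_of_minimal hσ hs halg hp hps hpp hmin)

end Elem9

section Small10
set_option linter.unusedSectionVars false
set_option linter.unusedVariables false

variable {A W : Type*} [NonUnitalCStarAlgebra A] [PartialOrder A] [StarOrderedRing A]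
  [NonUnitalCStarAlgebra W] [PartialOrder W] [StarOrderedRing W]

lemma Stabilization.dense_ind (SB : Stabilization A W) {V : Submodule ℂ W}
    (hV : IsClosed (V : Set W)) (h : ∀ i j a, SB.emb i j a ∈ V) (w : W) : w ∈ V := by
  have h1 : Submodule.span ℂ {w : W | ∃ (i j : ℕ) (a : A), w = SB.emb i j a} ≤ V := by
    rw [Submodule.span_le]
    rintro _ ⟨i, j, a, rfl⟩
    exact h i j a
  have h2 : closure (Submodule.span ℂ {w : W | ∃ (i j : ℕ) (a : A), w = SB.emb i j a} : Set W)
      ⊆ V := closure_minimal h1 hV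
  rw [SB.dense_span.closure_eq] at h2
  exact h2 (Set.mem_univ w)

lemma Stabilization.corner (SB : Stabilization A W) (j k : ℕ) (t s : A) (w : W) :
    ∃ x, SB.emb 0 j t * w * SB.emb k 0 s = SB.emb 0 0 x := by
  have hc : IsClosed ((LinearMap.range (SB.emb 0 0) : Submodule ℂ W) : Set W) := by
    have h1 : Isometry (SB.emb 0 0) :=
      AddMonoidHomClass.isometry_of_norm (SB.emb 0 0) (SB.norm_emb 0 0)
    have := h1.isClosedEmbedding.isClosed_range
    exact (LinearMap.coe_range (SB.emb 0 0)) ▸ this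
  let T : W →ₗ[ℂ] W := 
    (LinearMap.mulRight ℂ (SB.emb k 0 s)).comp (LinearMap.mulLeft ℂ (SB.emb 0 j t))
  have hT : Continuous T := by
    show Continuous fun w => SB.emb 0 j t * w * SB.emb k 0 s
    fun_prop
  have := SB.dense_ind (V := (LinearMap.range (SB.emb 0 0)).comap T) (hc.preimage hT) (by
    intro i l a
    show SB.emb 0 j t * SB.emb i l a * SB.emb k 0 s ∈ LinearMap.range (SB.emb 0 0)
    rw [SB.emb_mul]
    split_ifs
    · rw [SB.emb_mul]
      split_ifs
      · exact ⟨_, rfl⟩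
      · exact zero_mem _
    · rw [zero_mul]; exact zero_mem _) w
  obtain ⟨x, hx⟩ := this
  exact ⟨x, hx.symm⟩

lemma Stabilization.exists_col (SB : Stabilization A W) {c : W} (hc : 0 ≤ c) (hc0 : c ≠ 0) :
    ∃ j t, c * SB.emb j 0 t ≠ 0 := by
  by_contra hcon
  push Not at hcon
  have hcs : star c = c := (IsSelfAdjoint.of_nonneg hc)
  let T : W →ₗ[ℂ] W := LinearMap.mulLeft ℂ c
  have hT : Continuous T := by
    show Continuous fun w => c * w
    fun_prop
  have hcl : IsClosed ((LinearMap.ker T : Submodule ℂ W) : Set W) := by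
    have : ((LinearMap.ker T : Submodule ℂ W) : Set W) = T ⁻¹' {0} := by ext; simp
    rw [this]
    exact isClosed_singleton.preimage hT
  have := SB.dense_ind hcl (by
    intro i l a
    rw [LinearMap.mem_ker]
    show c * SB.emb i l a = 0
    rw [← CStarRing.mul_star_self_eq_zero_iff, star_mul, SB.emb_star, hcs]
    have h1 : c * SB.emb i l a * (SB.emb l i (star a) * c)
        = c * SB.emb i 0 a * (SB.emb 0 i (star a) * c) := by
      have e1 : SB.emb i l a * SB.emb l i (star a) = SB.emb i 0 a * SB.emb 0 i (star a) := by
        rw [SB.emb_mul, SB.emb_mul, if_pos rfl, if_pos rfl]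
      calc _ = c * (SB.emb i l a * SB.emb l i (star a)) * c := by simp only [mul_assoc]
        _ = _ := by rw [e1]; simp only [mul_assoc]
    rw [h1, hcon, zero_mul]) c
  have h2 : star c * c = 0 := by rw [hcs]; exact this
  exact hc0 (CStarRing.star_mul_self_eq_zero_iff c |>.mp h2)

lemma halving (SB : Stabilization A W) (hσ : SigmaUnital A) (hs : IsSimpleCStar A)
    (hne : ¬ IsElementary A) (halg : pedersen A = Set.univ) {y : A} (hy : 0 ≤ y) (hy0 : y ≠ 0) :
    ∃ z, 0 ≤ z ∧ z ≠ 0 ∧ (∃ m, z = y * m * y) ∧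
      ∀ τ : QuasiTrace W, 2 * dTau τ (SB.emb 0 0 z) ≤ dTau τ (SB.emb 0 0 y) := by
  obtain ⟨w, hw, hw2⟩ := exists_nilpotent hσ hs hne halg hy hy0
  have hys : star y = y := (IsSelfAdjoint.of_nonneg hy)
  refine ⟨star (y * w * y) * (y * w * y), star_mul_self_nonneg _, ?_,
    ⟨star w * y * (y * w), ?_⟩, ?_⟩
  · rwa [Ne, CStarRing.star_mul_self_eq_zero_iff]
  · simp only [star_mul, hys, mul_assoc]
  · intro τ
    have e1 : SB.emb 0 0 (star (y * w * y) * (y * w * y))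
        = star (SB.hom 0 (y * w * y)) * SB.hom 0 (y * w * y) := by
      rw [← map_star, ← map_mul]; rfl
    have hYs : star (SB.hom 0 y) = SB.hom 0 y := by rw [← map_star, hys]
    rw [e1, ← SB.hom_apply]
    have hU2 : SB.hom 0 (y * w * y) * SB.hom 0 (y * w * y) = 0 := by
      rw [← map_mul, hw2, map_zero]
    set U := SB.hom 0 (y * w * y) with hU
    have hU' : U = SB.hom 0 y * SB.hom 0 w * SB.hom 0 y := by rw [hU, map_mul, map_mul]
    rw [two_mul]
    nth_rw 2 [dTau_trace]
    rw [← dTau_add_orth τ (star_mul_self_nonneg _) (mul_star_self_nonneg _)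
      (by rw [mul_assoc, ← mul_assoc U U, hU2, zero_mul, mul_zero])]
    refine dTau_of_her τ (SB.emb_nonneg 0 hy)
      (add_nonneg (star_mul_self_nonneg _) (mul_star_self_nonneg _)) (subset_closure ?_)
    refine ⟨star (SB.hom 0 w) * SB.hom 0 y * (SB.hom 0 y * SB.hom 0 w)
      + SB.hom 0 w * SB.hom 0 y * (SB.hom 0 y * star (SB.hom 0 w)), ?_⟩
    rw [hU']
    simp only [star_mul, hYs, mul_assoc, mul_add, add_mul]

lemma iter_halving (SB : Stabilization A W) (hσ : SigmaUnital A) (hs : IsSimpleCStar A)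
    (hne : ¬ IsElementary A) (halg : pedersen A = Set.univ) {x : A} (hx : star x = x) (hx0 : x ≠ 0)
    (k : ℕ) :
    ∃ z, 0 ≤ z ∧ z ≠ 0 ∧ (∃ m, z = x * m * x) ∧
      ∀ τ ∈ closure (QTSet SB), 2 ^ k * dTau τ (SB.emb 0 0 z) ≤ 1 := by
  induction k with
  | zero =>
    have h1 : 0 ≤ star (x * x) * (x * x) := star_mul_self_nonneg _
    refine ⟨star (x * x) * (x * x), h1, ?_, ⟨x * x, ?_⟩, ?_⟩
    · rw [Ne, CStarRing.star_mul_self_eq_zero_iff]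
      nth_rw 1 [← hx]
      rwa [CStarRing.star_mul_self_eq_zero_iff]
    · simp only [star_mul, hx, mul_assoc]
    · intro τ hτ
      rw [pow_zero, one_mul]
      exact dTau_bound_closure (SB.emb_nonneg 0 h1) (dTau_emb00_le SB h1) τ hτ
  | succ k ih =>
    obtain ⟨y, hy, hy0, ⟨m, hm⟩, hd⟩ := ih
    obtain ⟨z, hz, hz0, ⟨m', hm'⟩, hd'⟩ := halving SB hσ hs hne halg hy hy0
    refine ⟨z, hz, hz0, ⟨m * x * m' * (x * m), ?_⟩, ?_⟩
    · rw [hm', hm]; simp only [mul_assoc]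
    · intro τ hτ
      refine le_trans ?_ (hd τ hτ)
      rw [pow_succ, mul_assoc]
      gcongr
      exact hd' τ

lemma cancel_sq {x m : A} (hx : star x = x) (h : x * (x * m * x) * x = 0) : x * m * x = 0 := by
  have key : ∀ z : A, x * (x * z) = 0 → x * z = 0 := by
    intro z hz
    rw [← CStarRing.star_mul_self_eq_zero_iff, star_mul, hx, mul_assoc, hz, mul_zero]
  have h1 : x * (m * (x * x)) = 0 := key _ (by rw [← h]; simp only [mul_assoc])
  have h2 : x * (x * (star m * x)) = 0 := by
    have := congrArg star h1
    rw [star_zero] at this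
    rw [← this]; simp only [star_mul, hx, mul_assoc]
  have h3 := congrArg star (key _ h2)
  rw [star_zero] at h3
  rw [← h3]; simp only [star_mul, star_star, hx, mul_assoc]

lemma small_element (SB : Stabilization A W) (hσ : SigmaUnital A) (hs : IsSimpleCStar A)
    (hne : ¬ IsElementary A) (halg : pedersen A = Set.univ) {c : W} (hc : 0 ≤ c) (hc0 : c ≠ 0)
    {κ : ℝ≥0∞} (hκ : 0 < κ) :
    ∃ d, 0 ≤ d ∧ ‖d‖ = 1 ∧ (∃ m, d = c * m * c) ∧
      ∀ τ ∈ closure (QTSet SB), dTau τ d ≤ κ := by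
  obtain ⟨j, t, hv⟩ := SB.exists_col hc hc0
  have hcs : star c = c := (IsSelfAdjoint.of_nonneg hc)
  obtain ⟨x, hx⟩ := SB.corner j j (star t) t (c * c)
  set v := c * SB.emb j 0 t with hvdef
  have hvs : star v = SB.emb 0 j (star t) * c := by rw [hvdef, star_mul, SB.emb_star, hcs]
  have hvv : star v * v = SB.emb 0 0 x := by
    rw [← hx, hvs, hvdef]; simp only [mul_assoc]
  have hinj : Function.Injective (SB.emb 0 0) :=
    (AddMonoidHomClass.isometry_of_norm (SB.emb 0 0) (SB.norm_emb 0 0)).injective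
  have hxs : star x = x := by
    apply hinj
    rw [← SB.emb_star, ← hvv]; simp
  have hx0 : x ≠ 0 := by
    rintro rfl
    rw [_root_.map_zero, CStarRing.star_mul_self_eq_zero_iff] at hvv
    exact hv hvv
  obtain ⟨k, hk⟩ : ∃ k : ℕ, (2⁻¹ : ℝ≥0∞) ^ k < κ := ENNReal.exists_inv_two_pow_lt hκ.ne'
  obtain ⟨z, hz, hz0, ⟨m, hm⟩, hd⟩ := iter_halving SB hσ hs hne halg hxs hx0 k
  have hd' : ∀ τ ∈ closure (QTSet SB), dTau τ (SB.emb 0 0 z) ≤ κ := by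
    intro τ hτ
    refine le_trans ?_ hk.le
    rw [← ENNReal.inv_pow, ← one_div, ENNReal.le_div_iff_mul_le (by simp) (by simp), mul_comm]
    exact hd τ hτ
  have hZ := SB.emb_nonneg 0 hz
  set d := v * SB.emb 0 0 z * star v with hddef
  have hd0 : 0 ≤ d := star_right_conjugate_nonneg hZ v
  have hdne : d ≠ 0 := by
    intro h
    have h1 : star v * d * v = SB.emb 0 0 (x * z * x) := by
      have : SB.emb 0 0 (x * z * x) = (star v * v) * SB.emb 0 0 z * (star v * v) := by
        rw [hvv, SB.emb_mul, if_pos rfl, SB.emb_mul, if_pos rfl]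
      rw [this, hddef]; simp only [mul_assoc]
    rw [h, mul_zero, zero_mul] at h1
    have h2 : x * z * x = 0 := hinj (by rw [← h1, _root_.map_zero])
    rw [hm] at h2 hz0
    exact hz0 (cancel_sq hxs h2)
  have hn : 0 < ‖d‖ := norm_pos_iff.mpr hdne
  refine ⟨‖d‖⁻¹ • d, smul_nonneg (inv_nonneg.mpr hn.le) hd0, ?_,
    ⟨‖d‖⁻¹ • (SB.emb j 0 t * SB.emb 0 0 z * SB.emb 0 j (star t)), ?_⟩, ?_⟩
  · rw [norm_smul, norm_inv, norm_norm, inv_mul_cancel₀ hn.ne']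
  · rw [mul_smul_comm, smul_mul_assoc]
    congr 1
    rw [hddef, hvs, hvdef]; simp only [mul_assoc]
  · intro τ hτ
    refine (dTau_of_le τ hd0 (smul_nonneg (inv_nonneg.mpr hn.le) hd0)
      (inv_nonneg.mpr hn.le) le_rfl).trans (le_trans ?_ (hd' τ hτ))
    have := dTau_conj τ hZ (star v)
    rwa [star_star] at this

end Small10

section Final11
set_option linter.unusedSectionVars false
set_option linter.unusedVariables false

variable {A W : Type*} [NonUnitalCStarAlgebra A] [PartialOrder A] [StarOrderedRing A]
  [NonUnitalCStarAlgebra W] [PartialOrder W] [StarOrderedRing W]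

lemma cut_split (τ : QuasiTrace W) {x : W} (hx : 0 ≤ x) (hx1 : ‖x‖ ≤ 1) {δ : ℝ} (hδ : 0 < δ) :
    τ.toFun x ≤ dTau τ (fEps δ x) + ENNReal.ofReal δ * dTau τ x := by
  have hc1 : Continuous fun t => cutoff 1 (cutoff δ t) := (cutoff_cont 1).comp (cutoff_cont δ)
  have hc0 : cutoff 1 (cutoff δ 0) = 0 := by rw [cutoff_zero, cutoff_zero]
  have hm : Continuous fun t : ℝ => min t δ := by fun_prop
  have hm0 : min (0:ℝ) δ = 0 := min_eq_left hδ.le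
  have h1 : τ.toFun x ≤ τ.toFun (cfcₙ (fun t : ℝ => cutoff 1 (cutoff δ t) + min t δ) x) := by
    have := τ.pqt.mono_cfc hx (f := fun t : ℝ => t)
      (g := fun t : ℝ => cutoff 1 (cutoff δ t) + min t δ) continuous_id rfl (hc1.add hm)
      (by simp only [hc0, hm0, add_zero]) (fun t ht _ => ht) (by
        intro t ht htx
        by_cases h : δ ≤ t
        · rw [cutoff_eq_one hδ h, cutoff_eq_one one_pos le_rfl]
          have : 0 ≤ min t δ := le_min ht hδ.le
          linarith
        · rw [min_eq_left (not_le.mp h).le]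
          have := cutoff_nonneg 1 (cutoff δ t)
          linarith)
    rwa [cfcₙ_id' ℝ x] at this
  refine h1.trans ?_
  rw [τ.pqt.add_cfc hx hc1 hc0 hm hm0 (fun t _ => cutoff_nonneg _ _)
    (fun t ht => le_min ht hδ.le)]
  refine add_le_add ?_ ?_
  · rw [← cfc_cfc hx (cutoff_cont δ) (cutoff_zero δ) (cutoff_cont 1) (cutoff_zero 1)]
    exact fEps_le_dTau τ (fEps_nonneg δ x) one_pos
  · exact cfc_le_dTau τ hx hm hδ hm0 (fun t ht _ => le_min ht hδ.le) (fun t _ _ => min_le_right _ _)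

lemma fEps_factor {b : W} (hb : 0 ≤ b) {ε : ℝ} (hε : 0 < ε) : ∃ q, fEps ε b = b * q * b := by
  obtain ⟨g, hg, hg0, h1, -⟩ := factor_cfc hb (cutoff_cont ε) (half_pos hε)
    (fun t ht => cutoff_eq_zero hε ht)
  obtain ⟨g', -, -, -, h2⟩ := factor_cfc hb hg (half_pos hε) hg0
  exact ⟨cfcₙ g' b, by rw [fEps, h1, h2, mul_assoc]⟩

lemma fEps_half_ne {d : W} (hd : 0 ≤ d) (hd1 : ‖d‖ = 1) : fEps (1 / 2) d ≠ 0 := by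
  intro h
  have h1 : cfcₙ (cutoff (1 / 2)) d = cfcₙ (fun _ : ℝ => (0:ℝ)) d := by
    rw [cfcₙ_const_zero]; exact h
  have h2 := eqOn_of_cfcₙ_eq_cfcₙ h1 (.of_nonneg hd) (cutoff_cont _).continuousOn (cutoff_zero _)
    continuousOn_const rfl
  have h3 : ‖cfcₙ (fun t : ℝ => t) d‖ ≤ 1 / 2 := by
    refine norm_cfcₙ_le fun t ht => ?_
    have h4 := qs_bound hd ht
    rw [Real.norm_eq_abs, abs_of_nonneg h4.1]
    by_contra h5
    have h6 := h2 ht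
    rw [cutoff_eq_one (by norm_num) (not_le.mp h5).le] at h6
    norm_num at h6
  rw [cfcₙ_id' ℝ d, hd1] at h3
  norm_num at h3

lemma dTau_zero (τ : QuasiTrace W) : dTau τ (0 : W) = 0 := by
  have := dTau_add_orth τ (le_refl (0:W)) (le_refl 0) (by simp)
  unfold dTau
  simp [fEps, cfcₙ_apply_zero, τ.map_zero]

lemma final (SB : Stabilization A W)
    (hσ : SigmaUnital A) (hsimple : IsSimpleCStar A) (hne : ¬ IsElementary A)
    (halg : pedersen A = Set.univ) (hqt : (QTSet SB).Nonempty)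
    (a b : W) (ha : 0 ≤ a) (hb : 0 ≤ b)
    (hlt : ∀ τ ∈ closure (QTSet SB), dTau τ a < dTau τ b)
    (hω : omegaOn (closure (QTSet SB)) a = 0) :
    ∃ b₁ b₀ : W, ∃ δ : ℝ, 0 < δ ∧ δ < 1 / 4 ∧
      b₁ ∈ her b ∧ b₀ ∈ her b ∧ 0 ≤ b₁ ∧ 0 ≤ b₀ ∧ b₁ ≠ 0 ∧ b₀ ≠ 0 ∧
      ‖b₁‖ ≤ 1 ∧ ‖b₀‖ ≤ 1 ∧ b₁ * b₀ = 0 ∧ b₀ * b₁ = 0 ∧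
      ∀ τ ∈ closure (QTSet SB), dTau τ a < dTau τ (fEps δ b₁) := by
  obtain ⟨n, κ, hκ, hgap⟩ := uniform_gap SB ha hb hlt hω
  set ε : ℝ := 1 / (n + 1) with hεd
  have hε : 0 < ε := by positivity
  obtain ⟨τ₀, hτ₀⟩ := hqt
  replace hτ₀ := subset_closure hτ₀
  have hc0 : fEps ε b ≠ 0 := by
    intro h
    have := hgap τ₀ hτ₀
    rw [h, τ₀.map_zero] at this
    have h2 : (κ : ℝ≥0∞) ≤ 0 := le_trans le_add_self this
    simp at h2
    exact hκ.ne' h2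
  have hκ3 : (0 : ℝ≥0∞) < ((κ / 3 : NNReal) : ℝ≥0∞) := by
    rw [ENNReal.coe_pos]; positivity
  obtain ⟨d, hd, hd1, ⟨m, hm⟩, hdτ⟩ :=
    small_element SB hσ hsimple hne halg (fEps_nonneg ε b) hc0 hκ3
  set e := fEps (ε / 2) b with he
  have he0 : 0 ≤ e := fEps_nonneg _ _
  have hes : star e = e := IsSelfAdjoint.of_nonneg he0
  have he1 : ‖e‖ ≤ 1 := fEps_norm_le _ _
  have hec : e * fEps ε b = fEps ε b := by
    refine cfc_unit hb (cutoff_cont _) (cutoff_zero _) (cutoff_cont _) (cutoff_zero _) ?_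
    intro t ht _
    by_cases h : ε / 2 ≤ t
    · rw [cutoff_eq_one (half_pos hε) h, one_mul]
    · rw [cutoff_eq_zero hε (not_le.mp h).le, mul_zero]
  have hed : e * d = d := by rw [hm, ← mul_assoc, ← mul_assoc, hec]
  have heu : ∀ η : ℝ, 0 < η → e * fEps η d = fEps η d := fun η hη =>
    unit_cfc hd hed (cutoff_cont η) (half_pos hη) (fun t ht => cutoff_eq_zero hη ht)
  have hue : ∀ η : ℝ, 0 < η → fEps η d * e = fEps η d := fun η hη => by
    have h1 := congrArg star (heu η hη)
    rwa [star_mul, hes, (IsSelfAdjoint.of_nonneg (fEps_nonneg η d)).star_eq] at h1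
  set f := fEps (1 / 4) d with hf
  set b₀ := fEps (1 / 2) d with hb0
  have hf0 : 0 ≤ f := fEps_nonneg _ _
  have hb00 : 0 ≤ b₀ := fEps_nonneg _ _
  have hef : e * f = f := heu _ (by norm_num)
  have hfe : f * e = f := hue _ (by norm_num)
  have heb : e * b₀ = b₀ := heu _ (by norm_num)
  have hbe : b₀ * e = b₀ := hue _ (by norm_num)
  have hfb : f * b₀ = b₀ := by
    refine cfc_unit hd (cutoff_cont _) (cutoff_zero _) (cutoff_cont _) (cutoff_zero _) ?_
    intro t ht _
    by_cases h : 1 / 4 ≤ t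
    · rw [cutoff_eq_one (by norm_num) h, one_mul]
    · rw [cutoff_eq_zero (ε := 1 / 2) (by norm_num) (by linarith), mul_zero]
  have hee : e * e ≤ e := sq_le_self he0 he1
  have hfe_le : f ≤ e := by
    have h1 := CStarAlgebra.star_left_conjugate_le_norm_smul (a := e) (b := f) (hb := .of_nonneg hf0)
    rw [hes, hef, hfe] at h1
    refine h1.trans (le_trans ?_ hee)
    have h2 : 0 ≤ e * e := by simpa [hes] using star_mul_self_nonneg e
    calc ‖f‖ • (e * e) ≤ (1 : ℝ) • (e * e) :=
          smul_le_smul_of_nonneg_right (fEps_norm_le _ _) h2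
      _ = e * e := one_smul _ _
  set b₁ := e - f with hb1
  have hb10 : 0 ≤ b₁ := sub_nonneg.mpr hfe_le
  have hb1e : b₁ ≤ e := sub_le_self _ hf0
  have hb1n : ‖b₁‖ ≤ 1 := (CStarAlgebra.norm_le_norm_of_nonneg_of_le hb10 hb1e).trans he1
  have h10 : b₁ * b₀ = 0 := by rw [hb1, sub_mul, heb, hfb, sub_self]
  have h01 : b₀ * b₁ = 0 := by
    have h1 := congrArg star h10
    rwa [star_mul, (IsSelfAdjoint.of_nonneg hb00).star_eq,
      (IsSelfAdjoint.of_nonneg hb10).star_eq, star_zero] at h1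
  obtain ⟨q, hq⟩ := fEps_factor hb (half_pos hε)
  rw [← he] at hq
  have hher : ∀ z : W, e * z = z → z * e = z → ∃ y, z = b * y * b := by
    intro z h1 h2
    refine ⟨q * b * z * (b * q), ?_⟩
    have h3 : z = (b * q * b) * z * (b * q * b) := by rw [← hq, h1, h2]
    nth_rw 1 [h3]
    simp only [mul_assoc]
  obtain ⟨yf, hyf⟩ := hher f hef hfe
  have hb1h : b₁ ∈ her b := subset_closure ⟨q - yf, by
    rw [hb1, mul_sub, sub_mul, ← hq, ← hyf]⟩
  have hb0h : b₀ ∈ her b := subset_closure (hher b₀ heb hbe)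
  obtain ⟨N, hN⟩ := dTau_pedersen_le SB (fEps_mem_pedersen hb (half_pos hε)) he0
  set δ : ℝ := min (1 / 8) (κ / (3 * (N + 1))) with hδd
  have hκ' : (0:ℝ) < κ := hκ
  have hδ : 0 < δ := lt_min (by norm_num) (by positivity)
  have hδ4 : δ < 1 / 4 := (min_le_left _ _).trans_lt (by norm_num)
  have hδN : ENNReal.ofReal δ * N ≤ ((κ / 3 : NNReal) : ℝ≥0∞) := by
    have h1 : δ * N ≤ κ / 3 := by
      have h2 : δ ≤ κ / (3 * (N + 1)) := min_le_right _ _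
      rw [le_div_iff₀ (by positivity)] at h2
      nlinarith
    rw [← ENNReal.ofReal_natCast, ← ENNReal.ofReal_mul hδ.le, ← ENNReal.ofReal_coe_nnreal]
    apply ENNReal.ofReal_le_ofReal
    simpa using h1
  have hmain : ∀ τ ∈ closure (QTSet SB), dTau τ a < dTau τ (fEps δ b₁) := by
    intro τ hτ
    have h1 : τ.toFun e = τ.toFun b₁ + τ.toFun f := by
      rw [← τ.map_add_of_commute b₁ f hb10 hf0 (by rw [hb1, sub_mul, mul_sub, hef, hfe]), hb1,
        sub_add_cancel]
    have h2 : τ.toFun (fEps ε b) ≤ τ.toFun e := τ.pqt.fEps_anti hb (half_pos hε) (half_le_self hε.le)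
    have h3 : τ.toFun f ≤ ((κ / 3 : NNReal) : ℝ≥0∞) :=
      (fEps_le_dTau τ hd (by norm_num)).trans (hdτ τ hτ)
    have h4 : dTau τ b₁ ≤ N :=
      (dTau_of_le τ he0 hb10 zero_le_one (by rwa [one_smul])).trans (hN τ hτ)
    have h5 := cut_split τ hb10 hb1n hδ
    have h6 : ENNReal.ofReal δ * dTau τ b₁ ≤ ((κ / 3 : NNReal) : ℝ≥0∞) :=
      (mul_le_mul_right h4 _).trans hδN
    have h7 : dTau τ a + κ ≤ dTau τ (fEps δ b₁) + ((κ / 3 : NNReal) : ℝ≥0∞)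
        + ((κ / 3 : NNReal) : ℝ≥0∞) :=
      (hgap τ hτ).trans (h2.trans (h1.le.trans (add_le_add (h5.trans (add_le_add le_rfl h6)) h3)))
    have hfin : dTau τ a + κ < ∞ := (hgap τ hτ).trans_lt
      (τ.finite_on_pedersen _ (fEps_mem_pedersen hb hε) (fEps_nonneg _ _))
    by_contra hcon
    have h8 : dTau τ a + κ ≤ dTau τ a + ((κ / 3 : NNReal) : ℝ≥0∞) + ((κ / 3 : NNReal) : ℝ≥0∞) :=
      h7.trans (by gcongr; exact not_lt.mp hcon)
    have hfin' : dTau τ a ≠ ∞ := (lt_of_le_of_lt le_self_add hfin).ne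
    rw [add_assoc, ENNReal.add_le_add_iff_left hfin', ← ENNReal.coe_add, ENNReal.coe_le_coe] at h8
    have h9 : (κ:ℝ) ≤ κ / 3 + κ / 3 := by exact_mod_cast h8
    linarith
  refine ⟨b₁, b₀, δ, hδ, hδ4, hb1h, hb0h, hb10, hb00, ?_, fEps_half_ne hd hd1, hb1n,
    fEps_norm_le _ _, h10, h01, hmain⟩
  intro h
  have h1 := hmain τ₀ hτ₀
  have h2 : fEps δ b₁ = 0 := by rw [h, fEps]; exact cfcₙ_apply_zero
  rw [h2, dTau_zero] at h1
  exact not_lt_bot h1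

end Final11

/-- **Corollary.** Let `A` be a σ-unital non-elementary algebraically simple C*-algebra with
`QT(A) ≠ ∅` and `a, b ∈ (A ⊗ K)₊` with `d_τ(a) < d_τ(b)` for all `τ ∈ \overline{QT(A)}^w` and
`ω(a) = 0`.  Then there are mutually orthogonal nonzero positive contractions `b₁, b₀ ∈ Her(b)`
and `0 < δ < 1/4` with `d_τ(a) < d_τ(f_δ(b₁))` for all `τ ∈ \overline{QT(A)}^w`. -/
theorem exists_two_orthogonal_dominating_cutoff
    (SB : Stabilization A W)
    (hσ : SigmaUnital A) (hsimple : IsSimpleCStar A) (hne : ¬ IsElementary A)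
    (halg : pedersen A = Set.univ) (hqt : (QTSet SB).Nonempty)
    (a b : W) (ha : 0 ≤ a) (hb : 0 ≤ b)
    (hlt : ∀ τ ∈ closure (QTSet SB), dTau τ a < dTau τ b)
    (hω : omegaOn (closure (QTSet SB)) a = 0) :
    ∃ b₁ b₀ : W, ∃ δ : ℝ, 0 < δ ∧ δ < 1 / 4 ∧
      b₁ ∈ her b ∧ b₀ ∈ her b ∧ 0 ≤ b₁ ∧ 0 ≤ b₀ ∧ b₁ ≠ 0 ∧ b₀ ≠ 0 ∧
      ‖b₁‖ ≤ 1 ∧ ‖b₀‖ ≤ 1 ∧ b₁ * b₀ = 0 ∧ b₀ * b₁ = 0 ∧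
      ∀ τ ∈ closure (QTSet SB), dTau τ a < dTau τ (fEps δ b₁) := by
  exact final SB hσ hsimple hne halg hqt a b ha hb hlt hω

end Paper
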